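/- arXiv:2012.13795 — 5 statements merged into one kernel-verified Lean document; each statement's English description precedes it below -/
import Mathlib

section
/- Let σ ≤ π be permutations. Suppose that for each τ ∈ [σ,π] a subset NE(τ,π) of E(τ,π) is fixed (the 'normal' embeddings of τ into π), with NE(π,π) = E(π,π). For λ ∈ [σ,π), let NE_λ(odd,π) be the union of the sets NE(τ,π) over all τ ∈ [λ,π] of odd length, and NE_λ(even,π) the union of the sets NE(τ,π) over all τ ∈ [λ,π] of even length. If for every λ ∈ [σ,π) with μ(σ,λ) ≠ 0 one has |NE_λ(odd,π)| = |NE_λ(even,π)|, then μ(σ,π) = (−1)^{|π|−|σ|} · |NE(σ,π)|. -/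
/-!
The permutation pattern poset and its Möbius function.

A permutation of length `n` is represented as an element of the symmetric
group on `Fin n`; the collection of all permutations of all lengths is the
sigma type `PPerm`.  Pattern containment `PPerm.Le` makes `PPerm` into the
permutation pattern poset, and `mu` is its Möbius function, defined by the
usual recursion `μ(σ,σ) = 1`, `μ(σ,π) = -∑_{σ ≤ λ < π} μ(σ,λ)` for `σ < π`
and `μ(σ,π) = 0` otherwise.
-/

open scoped Classical

/-- A permutation of an arbitrary finite length `n`, as an element of the
symmetric group on `Fin n`. -/
abbrev PPerm : Type := Σ n : ℕ, Equiv.Perm (Fin n)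

namespace PPerm

/-- Classical pattern containment `σ ≤ π`: there is a strictly increasing map
of positions along which `π` realises the same relative order as `σ`. -/
def Le (σ π : PPerm) : Prop :=
  ∃ f : Fin σ.1 → Fin π.1, StrictMono f ∧
    ∀ a b : Fin σ.1, σ.2 a < σ.2 b ↔ π.2 (f a) < π.2 (f b)

/-- Strict pattern containment. -/
def Lt (σ π : PPerm) : Prop := Le σ π ∧ σ ≠ π

/-- The permutation `1` of length one. -/
def one : PPerm := ⟨1, 1⟩

/-- The direct sum `α ⊕ β` of two permutations: `β` is placed after and
above `α`. -/
def dsum (α β : PPerm) : PPerm :=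
  ⟨α.1 + β.1, finSumFinEquiv.symm.trans ((Equiv.sumCongr α.2 β.2).trans finSumFinEquiv)⟩

end PPerm

/-- Fuelled recursion computing the Möbius function of the permutation
pattern poset.  Any `λ` with `σ ≤ λ < π` has length `< |π|`, so for any
fuel `≥ |π| + 1` this computes the standard recursion
`μ(σ,σ) = 1`, `μ(σ,π) = -∑_{σ ≤ λ < π} μ(σ,λ)` for `σ < π`, and
`μ(σ,π) = 0` when `σ ≰ π`. -/
noncomputable def muAux : ℕ → PPerm → PPerm → ℤ
  | 0, _, _ => 0
  | n + 1, σ, π =>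
    if σ = π then 1
    else if PPerm.Le σ π then
      - ∑ m ∈ Finset.range π.1,
          ∑ p ∈ Finset.univ.filter
              (fun p : Equiv.Perm (Fin m) => PPerm.Le σ ⟨m, p⟩ ∧ PPerm.Le ⟨m, p⟩ π),
            muAux n σ ⟨m, p⟩
    else 0

/-- The Möbius function of the permutation pattern poset. -/
noncomputable def mu (σ π : PPerm) : ℤ := muAux (π.1 + 1) σ π

/-- The closed interval `[σ, π]` of the permutation pattern poset, as a
finset (any `λ ≤ π` has length `≤ |π|`). -/
noncomputable def intervalCC (σ π : PPerm) : Finset PPerm :=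
  (Finset.range (π.1 + 1)).biUnion fun m =>
    (Finset.univ.filter fun p : Equiv.Perm (Fin m) =>
        PPerm.Le σ ⟨m, p⟩ ∧ PPerm.Le ⟨m, p⟩ π).image fun p => (⟨m, p⟩ : PPerm)

/-- The half-open interval `[σ, π)` of the permutation pattern poset. -/
noncomputable def intervalCO (σ π : PPerm) : Finset PPerm :=
  (intervalCC σ π).filter fun lam => lam ≠ π

/-- `s` is the image of an embedding of `τ` into `π`.  Since an embedding of
`τ` into `π` (a strictly increasing map of positions realising the pattern
`τ`) is uniquely determined by its image, we identify the set `E(τ,π)` of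
embeddings of `τ` into `π` with the collection of such image sets; this also
makes embeddings with different sources distinct objects. -/
def IsEmbeddingImage (τ π : PPerm) (s : Finset (Fin π.1)) : Prop :=
  ∃ f : Fin τ.1 → Fin π.1, StrictMono f ∧
    (∀ a b : Fin τ.1, τ.2 a < τ.2 b ↔ π.2 (f a) < π.2 (f b)) ∧
    Finset.image f Finset.univ = s

theorem PPerm.perm_eq_of_lt_iff {n : ℕ} (p q : Equiv.Perm (Fin n))
    (h : ∀ a b, p a < p b ↔ q a < q b) : p = q := by
  have hm : StrictMono (fun x => q (p.symm x)) := by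
    intro x y hxy
    exact (h _ _).1 (by simpa using hxy)
  have hid : (fun x => q (p.symm x)) = id := by
    apply (StrictMono.range_inj hm strictMono_id).1
    rw [Set.range_id]
    exact (p.symm.trans q).surjective.range_eq
  ext a
  have := congrFun hid (p a)
  simp at this
  rw [this]

theorem IsEmbeddingImage.unique {τ τ' π : PPerm} {s : Finset (Fin π.1)}
    (h : IsEmbeddingImage τ π s) (h' : IsEmbeddingImage τ' π s) : τ = τ' := by
  obtain ⟨n, p⟩ := τ
  obtain ⟨m, q⟩ := τ'
  obtain ⟨f, hf, hf2, hf3⟩ := h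
  obtain ⟨g, hg, hg2, hg3⟩ := h'
  have hc1 := Finset.card_image_of_injective Finset.univ hf.injective
  have hc2 := Finset.card_image_of_injective Finset.univ hg.injective
  rw [hf3] at hc1
  rw [hg3, hc1] at hc2
  simp at hc2
  subst hc2
  have hfg : f = g := by
    apply (StrictMono.range_inj hf hg).1
    have := congrArg (fun t : Finset (Fin π.1) => (t : Set (Fin π.1))) (hf3.trans hg3.symm)
    simpa using this
  subst hfg
  have : p = q := PPerm.perm_eq_of_lt_iff p q fun a b => (hf2 a b).trans (hg2 a b).symm
  rw [this]

theorem IsEmbeddingImage.self_iff {π : PPerm} {s : Finset (Fin π.1)} :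
    IsEmbeddingImage π π s ↔ s = Finset.univ := by
  constructor
  · rintro ⟨f, hf, -, rfl⟩
    exact Finset.image_univ_of_surjective (Finite.surjective_of_injective hf.injective)
  · rintro rfl
    exact ⟨id, strictMono_id, fun _ _ => Iff.rfl, by simp⟩

theorem PPerm.Le.refl (π : PPerm) : PPerm.Le π π :=
  ⟨id, strictMono_id, fun _ _ => Iff.rfl⟩

theorem PPerm.Le.trans {σ τ π : PPerm} (h : PPerm.Le σ τ) (h' : PPerm.Le τ π) :
    PPerm.Le σ π := by
  obtain ⟨f, hf, hf2⟩ := h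
  obtain ⟨g, hg, hg2⟩ := h'
  exact ⟨g ∘ f, hg.comp hf, fun a b => (hf2 a b).trans (hg2 _ _)⟩

theorem PPerm.Le.length_le {σ π : PPerm} (h : PPerm.Le σ π) : σ.1 ≤ π.1 := by
  obtain ⟨f, hf, -⟩ := h
  simpa using Fintype.card_le_of_injective f hf.injective

theorem PPerm.Le.eq_of_length {n : ℕ} {p q : Equiv.Perm (Fin n)}
    (h : PPerm.Le ⟨n, p⟩ ⟨n, q⟩) : p = q := by
  obtain ⟨f, hf, hf2⟩ := h
  have h1 : IsEmbeddingImage ⟨n, p⟩ ⟨n, q⟩ Finset.univ :=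
    ⟨f, hf, hf2, Finset.image_univ_of_surjective (Finite.surjective_of_injective hf.injective)⟩
  have h2 := h1.unique (IsEmbeddingImage.self_iff.2 rfl)
  simpa using h2

theorem mem_intervalCC {σ π τ : PPerm} :
    τ ∈ intervalCC σ π ↔ PPerm.Le σ τ ∧ PPerm.Le τ π := by
  obtain ⟨m, p⟩ := τ
  simp only [intervalCC, Finset.mem_biUnion, Finset.mem_range, Finset.mem_image,
    Finset.mem_filter, Finset.mem_univ, true_and]
  constructor
  · rintro ⟨m', -, p', h, he⟩
    rw [← he]
    exact h
  · intro h
    exact ⟨m, Nat.lt_succ_of_le h.2.length_le, p, h, rfl⟩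

theorem muAux_fuel (σ : PPerm) : ∀ (n k : ℕ) (π : PPerm), π.1 < n → π.1 < k →
    muAux n σ π = muAux k σ π := by
  intro n
  induction n with
  | zero => intro k π h; omega
  | succ n ih =>
    intro k π hn hk
    obtain ⟨k, rfl⟩ : ∃ k', k = k' + 1 := ⟨k - 1, by omega⟩
    simp only [muAux]
    congr 3
    apply Finset.sum_congr rfl
    intro m hm
    apply Finset.sum_congr rfl
    intro p _
    have := Finset.mem_range.1 hm
    exact ih _ _ (by simp; omega) (by simp; omega)

theorem mu_rec {σ π : PPerm} (hne : σ ≠ π) (h : PPerm.Le σ π) :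
    mu σ π = - ∑ m ∈ Finset.range π.1,
          ∑ p ∈ Finset.univ.filter
              (fun p : Equiv.Perm (Fin m) => PPerm.Le σ ⟨m, p⟩ ∧ PPerm.Le ⟨m, p⟩ π),
            mu σ ⟨m, p⟩ := by
  rw [mu, muAux, if_neg hne, if_pos h]
  congr 1
  apply Finset.sum_congr rfl
  intro m hm
  apply Finset.sum_congr rfl
  intro p _
  have := Finset.mem_range.1 hm
  exact muAux_fuel _ _ _ _ (by simpa using this) (by simp)

theorem mu_self (σ : PPerm) : mu σ σ = 1 := by simp [mu, muAux]

theorem sum_intervalCC (σ π : PPerm) (F : PPerm → ℤ) :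
    ∑ x ∈ intervalCC σ π, F x = ∑ m ∈ Finset.range (π.1 + 1),
          ∑ p ∈ Finset.univ.filter
              (fun p : Equiv.Perm (Fin m) => PPerm.Le σ ⟨m, p⟩ ∧ PPerm.Le ⟨m, p⟩ π),
            F ⟨m, p⟩ := by
  rw [intervalCC, Finset.sum_biUnion]
  · apply Finset.sum_congr rfl
    intro m _
    rw [Finset.sum_image]
    intro a _ b _ hab
    simpa using hab
  · intro a _ b _ hab
    simp only [Function.onFun]
    rw [Finset.disjoint_left]
    intro x hx hy
    simp only [Finset.mem_image] at hx hy
    obtain ⟨p, -, rfl⟩ := hx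
    obtain ⟨q, -, hq⟩ := hy
    exact hab (congrArg Sigma.fst hq).symm

theorem sum_mu {σ τ : PPerm} (h : PPerm.Le σ τ) :
    ∑ x ∈ intervalCC σ τ, mu σ x = if τ = σ then 1 else 0 := by
  split_ifs with he
  · subst he
    have : intervalCC τ τ = {τ} := by
      ext x
      rw [mem_intervalCC, Finset.mem_singleton]
      constructor
      · rintro ⟨h1, h2⟩
        obtain ⟨n, p⟩ := τ
        obtain ⟨m, q⟩ := x
        have e : n = m := le_antisymm h1.length_le h2.length_le
        subst e
        rw [h1.eq_of_length]
      · rintro rfl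
        exact ⟨.refl _, .refl _⟩
    rw [this, Finset.sum_singleton, mu_self]
  · rw [sum_intervalCC, Finset.sum_range_succ]
    have : (Finset.univ.filter (fun p : Equiv.Perm (Fin τ.1) =>
        PPerm.Le σ ⟨τ.1, p⟩ ∧ PPerm.Le ⟨τ.1, p⟩ τ)) = {τ.2} := by
      ext p
      simp only [Finset.mem_filter, Finset.mem_univ, true_and, Finset.mem_singleton]
      constructor
      · rintro ⟨-, h2⟩
        exact PPerm.Le.eq_of_length (q := τ.2) h2
      · rintro rfl
        exact ⟨h, .refl _⟩
    rw [this, Finset.sum_singleton]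
    change _ + mu σ τ = 0
    rw [mu_rec (Ne.symm he) h]
    ring

/-- **(Proposition `pro-normal`.)**  Let `σ ≤ π` be permutations, and for each
`τ ∈ [σ,π]` fix a set `NE(τ,π) ⊆ E(τ,π)` of "normal" embeddings, such that the
unique embedding of `π` into `π` is normal, i.e. `NE(π,π) = E(π,π)`.  If for
every `λ ∈ [σ,π)` with `μ(σ,λ) ≠ 0` the number of normal embeddings into `π`
of odd-length members of `[λ,π]` equals the number of normal embeddings of
even-length members of `[λ,π]`, then `μ(σ,π) = (−1)^{|π|−|σ|}·|NE(σ,π)|`. -/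
theorem mu_eq_normal_embeddings (σ π : PPerm) (hσ : 0 < σ.1) (hσπ : PPerm.Le σ π)
    (NE : PPerm → Finset (Finset (Fin π.1)))
    (hNEsub : ∀ τ ∈ intervalCC σ π, ∀ s ∈ NE τ, IsEmbeddingImage τ π s)
    (hNEtop : NE π = Finset.univ.filter fun s => IsEmbeddingImage π π s)
    (hcancel : ∀ lam ∈ intervalCO σ π, mu σ lam ≠ 0 →
      (((intervalCC lam π).filter fun τ => Odd τ.1).biUnion NE).card =
        (((intervalCC lam π).filter fun τ => Even τ.1).biUnion NE).card) :
    mu σ π = (-1) ^ (π.1 - σ.1) * ((NE σ).card : ℤ) := by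
  have hdisj : ∀ τ ∈ intervalCC σ π, ∀ τ' ∈ intervalCC σ π, τ ≠ τ' →
      Disjoint (NE τ) (NE τ') := by
    intro τ h τ' h' hne
    rw [Finset.disjoint_left]
    intro s hs hs'
    exact hne ((hNEsub τ h s hs).unique (hNEsub τ' h' s hs'))
  have hcardtop : (NE π).card = 1 := by
    rw [hNEtop, Finset.card_eq_one]
    refine ⟨Finset.univ, ?_⟩
    ext s
    simp [IsEmbeddingImage.self_iff]
  have hsub : ∀ lam ∈ intervalCC σ π, intervalCC lam π ⊆ intervalCC σ π := by
    intro lam hl τ hτ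
    rw [mem_intervalCC] at *
    exact ⟨hl.1.trans hτ.1, hτ.2⟩
  have hG : ∀ lam ∈ intervalCC σ π, lam ≠ π → mu σ lam ≠ 0 →
      ∑ τ ∈ intervalCC lam π, (-1 : ℤ) ^ τ.1 * ((NE τ).card : ℤ) = 0 := by
    intro lam hl hne hmu
    have hc := hcancel lam (Finset.mem_filter.2 ⟨hl, hne⟩) hmu
    rw [Finset.card_biUnion, Finset.card_biUnion] at hc
    · rw [← Finset.sum_filter_add_sum_filter_not _ (fun τ : PPerm => Even τ.1)]
      have e1 : ∑ τ ∈ (intervalCC lam π).filter (fun τ => Even τ.1),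
          (-1 : ℤ) ^ τ.1 * ((NE τ).card : ℤ) =
          ((∑ τ ∈ (intervalCC lam π).filter (fun τ => Even τ.1), (NE τ).card : ℕ) : ℤ) := by
        push_cast
        apply Finset.sum_congr rfl
        intro τ hτ
        rw [(Finset.mem_filter.1 hτ).2.neg_one_pow, one_mul]
      have e2 : ∑ τ ∈ (intervalCC lam π).filter (fun τ => ¬ Even τ.1),
          (-1 : ℤ) ^ τ.1 * ((NE τ).card : ℤ) =
          -((∑ τ ∈ (intervalCC lam π).filter (fun τ => Odd τ.1), (NE τ).card : ℕ) : ℤ) := by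
        push_cast
        rw [← Finset.sum_neg_distrib]
        simp only [Nat.not_even_iff_odd]
        apply Finset.sum_congr rfl
        intro τ hτ
        rw [(Finset.mem_filter.1 hτ).2.neg_one_pow, neg_one_mul]
      rw [e1, e2, hc]
      ring
    · intro x hx y hy hxy
      exact hdisj x (hsub _ hl (Finset.mem_filter.1 hx).1) y
        (hsub _ hl (Finset.mem_filter.1 hy).1) hxy
    · intro x hx y hy hxy
      exact hdisj x (hsub _ hl (Finset.mem_filter.1 hx).1) y
        (hsub _ hl (Finset.mem_filter.1 hy).1) hxy
  have hππ : intervalCC π π = {π} := by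
    ext x
    rw [mem_intervalCC, Finset.mem_singleton]
    constructor
    · rintro ⟨h1, h2⟩
      have h3 : IsEmbeddingImage x π Finset.univ := by
        obtain ⟨f, hf, hf2⟩ := h2
        refine ⟨f, hf, hf2, ?_⟩
        rw [← Finset.card_eq_iff_eq_univ, Finset.card_image_of_injective _ hf.injective]
        have := h1.length_le
        have := (show PPerm.Le x π from ⟨f, hf, hf2⟩).length_le
        simp
        omega
      exact h3.unique (IsEmbeddingImage.self_iff.2 rfl)
    · rintro rfl
      exact ⟨.refl _, .refl _⟩
  have hmem : π ∈ intervalCC σ π := mem_intervalCC.2 ⟨hσπ, .refl _⟩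
  have hS1 : ∑ lam ∈ intervalCC σ π, mu σ lam *
      ∑ τ ∈ intervalCC lam π, (-1 : ℤ) ^ τ.1 * ((NE τ).card : ℤ) = mu σ π * (-1) ^ π.1 := by
    rw [Finset.sum_eq_single_of_mem π hmem]
    · rw [hππ, Finset.sum_singleton, hcardtop]
      simp
    · intro lam hl hne
      by_cases hmu : mu σ lam = 0
      · rw [hmu, zero_mul]
      · rw [hG lam hl hne hmu, mul_zero]
  have hS2 : ∑ lam ∈ intervalCC σ π, mu σ lam *
      ∑ τ ∈ intervalCC lam π, (-1 : ℤ) ^ τ.1 * ((NE τ).card : ℤ) =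
      (-1) ^ σ.1 * ((NE σ).card : ℤ) := by
    simp only [Finset.mul_sum]
    rw [Finset.sum_comm' (t' := intervalCC σ π) (s' := fun τ => intervalCC σ τ)]
    · simp only [← Finset.sum_mul]
      rw [Finset.sum_eq_single_of_mem σ (mem_intervalCC.2 ⟨.refl _, hσπ⟩)]
      · rw [sum_mu (.refl _), if_pos rfl, one_mul]
      · intro τ hτ hne
        rw [sum_mu (mem_intervalCC.1 hτ).1, if_neg hne, zero_mul]
    · intro x y
      simp only [mem_intervalCC]
      constructor
      · rintro ⟨⟨h1, h2⟩, h3, h4⟩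
        exact ⟨⟨h1, h3⟩, h1.trans h3, h4⟩
      · rintro ⟨⟨h1, h2⟩, h3, h4⟩
        exact ⟨⟨h1, h2.trans h4⟩, h2, h4⟩
  have hkey := hS1.symm.trans hS2
  have hsq : ((-1 : ℤ) ^ π.1) * (-1) ^ π.1 = 1 := by
    rw [← mul_pow]; simp
  have hsq' : ((-1 : ℤ) ^ σ.1) * (-1) ^ σ.1 = 1 := by
    rw [← mul_pow]; simp
  have hsplit : (-1 : ℤ) ^ π.1 = (-1) ^ (π.1 - σ.1) * (-1) ^ σ.1 := by
    rw [← pow_add, Nat.sub_add_cancel hσπ.length_le]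
  calc mu σ π = (mu σ π * (-1) ^ π.1) * (-1) ^ π.1 := by rw [mul_assoc, hsq, mul_one]
    _ = ((-1) ^ σ.1 * ((NE σ).card : ℤ)) * ((-1) ^ (π.1 - σ.1) * (-1) ^ σ.1) := by
      rw [hkey, hsplit]
    _ = (-1) ^ (π.1 - σ.1) * ((NE σ).card : ℤ) * ((-1 : ℤ) ^ σ.1 * (-1) ^ σ.1) := by ring
    _ = _ := by rw [hsq', mul_one]
end

section
/- If a permutation π has opposing adjacencies, i.e. π contains at least one up-adjacency and at least one down-adjacency, then μ(1,π) = 0. -/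
/-!
The permutation pattern poset and its Möbius function.

A permutation of length `n` is represented as an element of the symmetric
group on `Fin n`; the collection of all permutations of all lengths is the
sigma type `PPerm`.  Pattern containment `PPerm.Le` makes `PPerm` into the
permutation pattern poset, and `mu` is its Möbius function, defined by the
usual recursion `μ(σ,σ) = 1`, `μ(σ,π) = -∑_{σ ≤ λ < π} μ(σ,λ)` for `σ < π`
and `μ(σ,π) = 0` otherwise.
-/

open scoped Classical

/-- `π` has an up-adjacency: consecutive positions `i, i+1` with
`π(i+1) = π(i) + 1`. -/
def HasUpAdj (π : PPerm) : Prop :=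
  ∃ i j : Fin π.1, (j : ℕ) = (i : ℕ) + 1 ∧ (π.2 j : ℕ) = (π.2 i : ℕ) + 1

/-- `π` has a down-adjacency: consecutive positions `i, i+1` with
`π(i+1) = π(i) - 1`. -/
def HasDownAdj (π : PPerm) : Prop :=
  ∃ i j : Fin π.1, (j : ℕ) = (i : ℕ) + 1 ∧ (π.2 i : ℕ) = (π.2 j : ℕ) + 1

namespace OppAdj

lemma le_len {σ π : PPerm} (h : PPerm.Le σ π) : σ.1 ≤ π.1 := by
  obtain ⟨f, hf, -⟩ := h
  simpa using Fintype.card_le_of_injective f hf.injective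

lemma eq_of_le {m : ℕ} {p q : Equiv.Perm (Fin m)}
    (h : PPerm.Le ⟨m, p⟩ ⟨m, q⟩) : p = q := by
  obtain ⟨f, hf, hp⟩ := h
  have hid : f = id := by
    have hb : Function.Bijective f := Finite.injective_iff_bijective.mp hf.injective
    have := Subsingleton.elim (hf.orderIsoOfSurjective f hb.2) (OrderIso.refl (Fin m))
    funext x
    exact congrArg (fun e : Fin m ≃o Fin m => e x) this
  subst hid
  have hs : StrictMono (fun x => q (p.symm x)) := by
    intro x y hxy
    have := (hp (p.symm x) (p.symm y)).mp (by simpa using hxy)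
    simpa using this
  have hb : Function.Bijective (fun x => q (p.symm x)) :=
    Finite.injective_iff_bijective.mp hs.injective
  have := Subsingleton.elim (hs.orderIsoOfSurjective _ hb.2) (OrderIso.refl (Fin m))
  ext x
  have h2 := congrArg (fun e : Fin m ≃o Fin m => e (p x)) this
  simp at h2
  rw [h2]

lemma le_refl' (π : PPerm) : PPerm.Le π π := ⟨id, strictMono_id, fun _ _ => Iff.rfl⟩

lemma muAux_fuel (σ : PPerm) : ∀ n : ℕ, ∀ π : PPerm, π.1 < n → muAux n σ π = mu σ π := by
  intro n
  induction n using Nat.strong_induction_on with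
  | _ n ih =>
    intro π hπ
    obtain ⟨k, rfl⟩ : ∃ k, n = k + 1 := ⟨n - 1, by omega⟩
    by_cases hk : k = π.1
    · subst hk; rfl
    · unfold mu
      simp only [muAux]
      split_ifs with h1 h2
      · rfl
      · congr 1
        refine Finset.sum_congr rfl fun m hm => Finset.sum_congr rfl fun p _ => ?_
        have hm' := Finset.mem_range.mp hm
        rw [ih k (by omega) ⟨m, p⟩ (by simp; omega),
          ih π.1 (by omega) ⟨m, p⟩ (by simpa using hm')]
      · rfl

/-- Sum of the Möbius function over the part of `[σ, ρ]` of length `< N`. -/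
noncomputable def F (N : ℕ) (σ ρ : PPerm) : ℤ :=
  ∑ m ∈ Finset.range N, ∑ p : Equiv.Perm (Fin m),
    if PPerm.Le σ ⟨m, p⟩ ∧ PPerm.Le ⟨m, p⟩ ρ then mu σ ⟨m, p⟩ else 0

lemma mu_rec {σ π : PPerm} (h1 : σ ≠ π) (h2 : PPerm.Le σ π) :
    mu σ π = - F π.1 σ π := by
  unfold mu F
  simp only [muAux, if_neg h1, if_pos h2]
  congr 1
  refine Finset.sum_congr rfl fun m hm => ?_
  rw [Finset.sum_filter]
  refine Finset.sum_congr rfl fun p _ => ?_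
  rw [muAux_fuel σ π.1 ⟨m, p⟩ (by simpa using hm)]

lemma F_closed {σ ρ : PPerm} (h1 : σ ≠ ρ) (h2 : PPerm.Le σ ρ) :
    F (ρ.1 + 1) σ ρ = 0 := by
  have h := mu_rec h1 h2
  have : F (ρ.1 + 1) σ ρ = F ρ.1 σ ρ + mu σ ρ := by
    unfold F
    rw [Finset.sum_range_succ]
    congr 1
    rw [Finset.sum_eq_single ρ.2]
    · rw [if_pos ⟨h2, le_refl' _⟩]
    · intro p _ hp
      rw [if_neg]
      rintro ⟨-, h⟩
      exact hp (eq_of_le h)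
    · simp
  rw [this, h]; ring

lemma F_big {σ ρ : PPerm} {N : ℕ} (hN : ρ.1 < N) (h1 : σ ≠ ρ) (h2 : PPerm.Le σ ρ) :
    F N σ ρ = 0 := by
  rw [← F_closed h1 h2]
  unfold F
  symm
  apply Finset.sum_subset
  · intro x hx
    simp at hx ⊢; omega
  · intro m _ hm
    refine Finset.sum_eq_zero fun p _ => ?_
    rw [if_neg]
    rintro ⟨-, h⟩
    have := le_len h
    simp at hm this
    omega

/-- `lam` embeds in `π` avoiding the positions in `A`. -/
def Emb (lam π : PPerm) (A : Finset (Fin π.1)) : Prop :=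
  ∃ f : Fin lam.1 → Fin π.1, StrictMono f ∧
    (∀ a b : Fin lam.1, lam.2 a < lam.2 b ↔ π.2 (f a) < π.2 (f b)) ∧ ∀ x, f x ∉ A

lemma exists_del (π : PPerm) (A : Finset (Fin π.1)) :
    ∃ ρ : PPerm, ρ.1 = π.1 - A.card ∧ ∀ lam, PPerm.Le lam ρ ↔ Emb lam π A := by
  have hc : Aᶜ.card = π.1 - A.card := by simp [Finset.card_compl]
  set m := π.1 - A.card
  let e := Aᶜ.orderIsoOfFin hc
  let B := Aᶜ.map π.2.toEmbedding
  have hB : B.card = m := by simp [B, hc]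
  let d := B.orderIsoOfFin hB
  have hmem : ∀ x, π.2 (e x) ∈ B := fun x => by
    have := (e x).2
    exact Finset.mem_map_of_mem _ this
  let t : Fin m → Fin m := fun x => d.symm ⟨π.2 (e x), hmem x⟩
  have ht : Function.Injective t := by
    intro x y h
    have := d.symm.injective h
    simp only [Subtype.mk.injEq] at this
    exact e.injective (Subtype.ext (π.2.injective this))
  let τ : Equiv.Perm (Fin m) := Equiv.ofBijective t (Finite.injective_iff_bijective.mp ht)
  have hτ : ∀ a b, τ a < τ b ↔ π.2 (e a) < π.2 (e b) := by
    intro a b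
    change d.symm _ < d.symm _ ↔ _
    rw [d.symm.lt_iff_lt]
    rfl
  refine ⟨⟨m, τ⟩, rfl, fun lam => ⟨?_, ?_⟩⟩
  · rintro ⟨f, hf, hp⟩
    refine ⟨fun x => e (f x), fun x y hxy => e.strictMono (hf hxy), fun a b => ?_, fun x => ?_⟩
    · rw [hp]; exact hτ _ _
    · have := (e (f x)).2
      exact Finset.mem_compl.mp this
  · rintro ⟨f, hf, hp, hA⟩
    refine ⟨fun x => e.symm ⟨f x, Finset.mem_compl.mpr (hA x)⟩, fun x y hxy => ?_, fun a b => ?_⟩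
    · exact e.symm.strictMono (hf hxy)
    · rw [hp]
      refine Iff.trans ?_ (hτ _ _).symm
      simp

lemma shift_lt {n : ℕ} (h : Fin n → Fin n) (hinj : Function.Injective h) {u v : Fin n}
    (huv : (h v : ℕ) = h u + 1 ∨ (h u : ℕ) = h v + 1) {x y : Fin n} (hx : x ≠ v) (hy : y ≠ v) :
    h (if x = u then v else x) < h (if y = u then v else y) ↔ h x < h y := by
  have e1 : (h x : ℕ) ≠ h v := fun e => hx (hinj (Fin.ext e))
  have e2 : (h y : ℕ) ≠ h v := fun e => hy (hinj (Fin.ext e))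
  have e3 : x ≠ u → (h x : ℕ) ≠ h u := fun ne e => ne (hinj (Fin.ext e))
  have e4 : y ≠ u → (h y : ℕ) ≠ h u := fun ne e => ne (hinj (Fin.ext e))
  simp only [Fin.lt_def]
  split_ifs with a b b
  · subst a b; simp
  · subst a; have := e4 b; omega
  · subst b; have := e3 a; omega
  · rfl

lemma succ_of_between {n : ℕ} (g : Equiv.Perm (Fin n)) (a b : Fin n) (hab : g a < g b)
    (h : ∀ c, g a < g c → g c < g b → False) : (g b : ℕ) = g a + 1 := by
  by_contra hne
  have hb := (g b).2
  have hab' : (g a : ℕ) < g b := hab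
  refine h (g.symm ⟨g a + 1, by omega⟩) ?_ ?_
  · simp [Fin.lt_def]
  · simp [Fin.lt_def]; omega

lemma adj_of_emb {lam π : PPerm} {A : Finset (Fin π.1)} {i j : Fin π.1}
    (hij : (j : ℕ) = i + 1)
    (hv : (π.2 j : ℕ) = π.2 i + 1 ∨ (π.2 i : ℕ) = π.2 j + 1)
    (hj : j ∉ A) (h1 : Emb lam π A) (h2 : ¬ Emb lam π (insert i A)) :
    ∃ a b : Fin lam.1, (b : ℕ) = a + 1 ∧
      ((π.2 j : ℕ) = π.2 i + 1 → (lam.2 b : ℕ) = lam.2 a + 1) ∧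
      ((π.2 i : ℕ) = π.2 j + 1 → (lam.2 a : ℕ) = lam.2 b + 1) := by
  obtain ⟨f, hf, hp, hA⟩ := h1
  by_cases hi : ∃ a, f a = i
  swap
  · push Not at hi
    exact absurd ⟨f, hf, hp, fun x => by simp [hi x, hA x]⟩ h2
  by_cases hjr : ∃ b, f b = j
  swap
  · push Not at hjr
    refine absurd ⟨fun x => if f x = i then j else f x, fun x y hxy => ?_, fun a b => ?_,
      fun x => ?_⟩ h2
    · exact (shift_lt id Function.injective_id (Or.inl hij) (hjr x) (hjr y)).mpr (hf hxy)
    · rw [hp]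
      exact (shift_lt π.2 π.2.injective hv (hjr a) (hjr b)).symm
    · have hne : j ≠ i := fun e => by rw [e] at hij; omega
      dsimp only
      split_ifs with h
      · simp [hne, hj]
      · simp [h, hA x]
  obtain ⟨a, rfl⟩ := hi
  obtain ⟨b, rfl⟩ := hjr
  refine ⟨a, b, ?_, fun hu => ?_, fun hd => ?_⟩
  · have hab : a < b := hf.lt_iff_lt.mp (by rw [Fin.lt_def]; omega)
    refine succ_of_between (Equiv.refl _) a b hab fun c h3 h4 => ?_
    have h3' : f a < f c := hf h3
    have h4' : f c < f b := hf h4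
    rw [Fin.lt_def] at h3' h4'
    omega
  · refine succ_of_between lam.2 a b ((hp _ _).mpr (by rw [Fin.lt_def]; omega)) fun c h3 h4 => ?_
    have h3' := (hp _ _).mp h3
    have h4' := (hp _ _).mp h4
    rw [Fin.lt_def] at h3' h4'
    omega
  · refine succ_of_between lam.2 b a ((hp _ _).mpr (by rw [Fin.lt_def]; omega)) fun c h3 h4 => ?_
    have h3' := (hp _ _).mp h3
    have h4' := (hp _ _).mp h4
    rw [Fin.lt_def] at h3' h4'
    omega

lemma one_le {ρ : PPerm} (h : 0 < ρ.1) : PPerm.Le PPerm.one ρ := by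
  refine ⟨fun _ => ⟨0, h⟩, fun x y hxy => ?_, fun a b => ?_⟩
  · exact absurd hxy (by have : x = y := Subsingleton.elim (α := Fin 1) x y
                         simp [this])
  · have : a = b := Subsingleton.elim (α := Fin 1) a b
    simp [this]

lemma one_ne {ρ : PPerm} (h : 1 < ρ.1) : PPerm.one ≠ ρ := by
  rintro rfl
  simp [PPerm.one] at h

lemma Emb.mono {lam π : PPerm} {A B : Finset (Fin π.1)} (hAB : A ⊆ B) (h : Emb lam π B) :
    Emb lam π A := by
  obtain ⟨f, hf, hp, hB⟩ := h
  exact ⟨f, hf, hp, fun x hx => hB x (hAB hx)⟩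

lemma le_iff_emb (lam π : PPerm) : PPerm.Le lam π ↔ Emb lam π ∅ := by
  simp [Emb, PPerm.Le]

lemma ite_logic {c0 c1 c2 c3 U D L : Prop} {x : ℤ} (s1 : c1 → c0) (s2 : c2 → c0)
    (s3 : c3 → c1) (s4 : c3 → c2) (u1 : c0 → ¬ c1 → U) (u2 : c2 → ¬ c3 → U)
    (d1 : c0 → ¬ c2 → D) (d2 : c1 → ¬ c3 → D) (hno : ¬ (U ∧ D)) :
    (if L ∧ c0 then x else 0) = (if L ∧ c1 then x else 0) + (if L ∧ c2 then x else 0)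
      - (if L ∧ c3 then x else 0) := by
  by_cases e3 : c3
  · simp [e3, s3 e3, s4 e3, s1 (s3 e3)]
  by_cases e1 : c1 <;> by_cases e2 : c2
  · exact absurd ⟨u2 e2 e3, d2 e1 e3⟩ hno
  · simp [e1, e2, e3, s1 e1]
  · simp [e1, e2, e3, s2 e2]
  · have e0 : ¬ c0 := fun e0 => hno ⟨u1 e0 e1, d1 e0 e2⟩
    simp [e0, e1, e2, e3]

theorem main (n : ℕ) : ∀ π : PPerm, π.1 = n → HasUpAdj π → HasDownAdj π →
    mu PPerm.one π = 0 := by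
  induction n using Nat.strong_induction_on with
  | _ n ih =>
  rintro π hn ⟨i, j, hij, hu⟩ ⟨k, l, hkl, hd⟩
  have hik : i ≠ k := by
    rintro rfl
    have : j = l := Fin.ext (by omega)
    subst this; omega
  have hil : i ≠ l := by
    intro e; subst e
    have : π.2 j = π.2 k := Fin.ext (by omega)
    have := π.2.injective this
    subst this; omega
  have hjk : j ≠ k := by
    intro e; subst e
    have : π.2 i = π.2 l := Fin.ext (by omega)
    exact hil (π.2.injective this)
  have hjl : j ≠ l := by
    intro e; subst e; exact hik (Fin.ext (by omega))
  have hlen : 4 ≤ π.1 := by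
    have h1 := i.2
    have h2 := j.2
    have h3 := k.2
    have h4 := l.2
    rw [ne_eq, Fin.ext_iff] at hik hil hjk hjl
    omega
  obtain ⟨ρ₁, hl₁, h₁⟩ := exists_del π {i}
  obtain ⟨ρ₂, hl₂, h₂⟩ := exists_del π {k}
  obtain ⟨ρ₃, hl₃, h₃⟩ := exists_del π {i, k}
  rw [Finset.card_singleton] at hl₁ hl₂
  rw [Finset.card_pair hik] at hl₃
  rw [mu_rec (one_ne (by omega)) (one_le (by omega))]
  have key : F π.1 PPerm.one π = F π.1 PPerm.one ρ₁ + F π.1 PPerm.one ρ₂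
      - F π.1 PPerm.one ρ₃ := by
    unfold F
    rw [← Finset.sum_add_distrib, ← Finset.sum_sub_distrib]
    refine Finset.sum_congr rfl fun m hm => ?_
    rw [← Finset.sum_add_distrib, ← Finset.sum_sub_distrib]
    refine Finset.sum_congr rfl fun p _ => ?_
    have hm' : m < n := by rw [← hn]; exact Finset.mem_range.mp hm
    rw [h₁, h₂, h₃, le_iff_emb _ π]
    by_cases hz : mu PPerm.one ⟨m, p⟩ = 0
    · simp [hz]
    have hno : ¬ (HasUpAdj ⟨m, p⟩ ∧ HasDownAdj ⟨m, p⟩) := fun h => hz (ih m hm' _ rfl h.1 h.2)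
    have s1 : Emb ⟨m, p⟩ π {i} → Emb ⟨m, p⟩ π ∅ := Emb.mono (by simp)
    have s2 : Emb ⟨m, p⟩ π {k} → Emb ⟨m, p⟩ π ∅ := Emb.mono (by simp)
    have s3 : Emb ⟨m, p⟩ π {i, k} → Emb ⟨m, p⟩ π {i} := Emb.mono (by simp)
    have s4 : Emb ⟨m, p⟩ π {i, k} → Emb ⟨m, p⟩ π {k} := Emb.mono (by simp)
    have up : ∀ A : Finset (Fin π.1), j ∉ A → Emb ⟨m, p⟩ π A → ¬ Emb ⟨m, p⟩ π (insert i A) →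
        HasUpAdj ⟨m, p⟩ := fun A hA x y => by
      obtain ⟨a, b, q, r, -⟩ := adj_of_emb hij (Or.inl hu) hA x y
      exact ⟨a, b, q, r hu⟩
    have down : ∀ A : Finset (Fin π.1), l ∉ A → Emb ⟨m, p⟩ π A → ¬ Emb ⟨m, p⟩ π (insert k A) →
        HasDownAdj ⟨m, p⟩ := fun A hA x y => by
      obtain ⟨a, b, q, -, r⟩ := adj_of_emb hkl (Or.inr hd) hA x y
      exact ⟨a, b, q, r hd⟩
    have u1 := up ∅ (by simp)
    have u2 := up {k} (by simpa using hjk)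
    have d1 := down ∅ (by simp)
    have d2 := down {i} (by simpa using hil.symm)
    rw [Finset.pair_comm k i] at d2
    rw [insert_empty_eq] at u1 d1
    exact ite_logic s1 s2 s3 s4 u1 u2 d1 d2 hno
  rw [key, F_big (by omega) (one_ne (by omega)) (one_le (by omega)),
    F_big (by omega) (one_ne (by omega)) (one_le (by omega)),
    F_big (by omega) (one_ne (by omega)) (one_le (by omega))]
  simp

end OppAdj

/-- **Permutations with opposing adjacencies are Möbius zeros.**  If `π`
contains at least one up-adjacency and at least one down-adjacency, then
`μ(1,π) = 0`. -/
theorem mu_one_eq_zero_of_opposing_adjacencies (π : PPerm)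
    (hup : HasUpAdj π) (hdown : HasDownAdj π) :
    mu PPerm.one π = 0 := by
  exact OppAdj.main _ π rfl hup hdown
end

section
/- Let s_n be the number of permutations of length n that have opposing adjacencies. Then s_n/n! = (1 − 1/e)² + O(1/n); precisely, there exists a constant C > 0 such that |s_n/n! − (1 − 1/e)²| ≤ C/n for all n ≥ 1. -/
/-!
The permutation pattern poset and its Möbius function.

A permutation of length `n` is represented as an element of the symmetric
group on `Fin n`; the collection of all permutations of all lengths is the
sigma type `PPerm`.  Pattern containment `PPerm.Le` makes `PPerm` into the
permutation pattern poset, and `mu` is its Möbius function, defined by the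
usual recursion `μ(σ,σ) = 1`, `μ(σ,π) = -∑_{σ ≤ λ < π} μ(σ,λ)` for `σ < π`
and `μ(σ,π) = 0` otherwise.
-/

open scoped Classical

/-- The number `s_n` of permutations of length `n` having opposing
adjacencies (at least one up-adjacency and at least one down-adjacency). -/
noncomputable def numOpposing (n : ℕ) : ℕ :=
  (Finset.univ.filter fun p : Equiv.Perm (Fin n) =>
    HasUpAdj ⟨n, p⟩ ∧ HasDownAdj ⟨n, p⟩).card

namespace OppAdj

open Finset

/-- insert value `v` at position `p`. -/
noncomputable def ins {m : ℕ} (p v : Fin (m+1)) (σ : Equiv.Perm (Fin m)) :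
    Equiv.Perm (Fin (m+1)) :=
  ((finSuccEquiv' p).trans (Equiv.optionCongr σ)).trans (finSuccEquiv' v).symm

lemma ins_self {m : ℕ} (p v : Fin (m+1)) (σ : Equiv.Perm (Fin m)) : ins p v σ p = v := by
  simp [ins]

lemma ins_succAbove {m : ℕ} (p v : Fin (m+1)) (σ : Equiv.Perm (Fin m)) (a : Fin m) :
    ins p v σ (p.succAbove a) = v.succAbove (σ a) := by
  simp [ins]

lemma ins_bij {m : ℕ} (p : Fin (m+1)) :
    Function.Bijective (fun q : Fin (m+1) × Equiv.Perm (Fin m) => ins p q.1 q.2) := by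
  rw [Fintype.bijective_iff_injective_and_card]
  constructor
  · rintro ⟨v, σ⟩ ⟨w, τ⟩ h
    simp only at h
    have hv : v = w := by
      have := congrArg (fun e => e p) h
      simpa [ins_self] using this
    subst hv
    congr 1
    ext a : 1
    have := congrArg (fun e => e (p.succAbove a)) h
    simpa [ins_succAbove] using this
  · simp [Fintype.card_perm, Nat.factorial_succ]

lemma sum_ins {m : ℕ} (p : Fin (m+1)) (g : Equiv.Perm (Fin (m+1)) → ℝ) :
    ∑ π, g π = ∑ σ : Equiv.Perm (Fin m), ∑ v, g (ins p v σ) := by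
  rw [← (ins_bij p).sum_comp g, Fintype.sum_prod_type, Finset.sum_comm]

/-- adjacent pairs of positions with type in `S`. -/
noncomputable def A {n : ℕ} (S : Finset Bool) (π : Equiv.Perm (Fin n)) : Finset (Fin n × Fin n) :=
  univ.filter fun q => (q.2 : ℕ) = q.1 + 1 ∧
    ((true ∈ S ∧ (π q.2 : ℕ) = π q.1 + 1) ∨ (false ∈ S ∧ (π q.1 : ℕ) = π q.2 + 1))

lemma mem_A {n : ℕ} (S : Finset Bool) (π : Equiv.Perm (Fin n)) (a b : Fin n) :
    (a, b) ∈ A S π ↔ (b : ℕ) = a + 1 ∧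
    ((true ∈ S ∧ (π b : ℕ) = π a + 1) ∨ (false ∈ S ∧ (π a : ℕ) = π b + 1)) := by
  simp [A]

lemma val_succAbove {m : ℕ} (p : Fin (m+1)) (a : Fin m) :
    (p.succAbove a : ℕ) = if (a : ℕ) < p then (a : ℕ) else a + 1 := by
  rw [Fin.succAbove]
  simp only [Fin.lt_def, Fin.val_castSucc]
  split_ifs <;> simp

lemma card_stay {m : ℕ} (S : Finset Bool) (p v : Fin (m+1)) (σ : Equiv.Perm (Fin m))
    (h : ∀ a b, (a, b) ∈ A univ σ → (b : ℕ) ≠ p ∧ max (σ a : ℕ) (σ b) ≠ v) :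
    (A S (ins p v σ)).card = (A S σ).card +
      ((A S (ins p v σ)).filter (fun q => q.1 = p ∨ q.2 = p)).card := by
  rw [← Finset.card_filter_add_card_filter_not (s := A S (ins p v σ))
    (fun q => q.1 = p ∨ q.2 = p), add_comm]
  congr 1
  rw [← Finset.card_image_of_injective (A S σ)
    (f := fun q : Fin m × Fin m => (p.succAbove q.1, p.succAbove q.2))]
  · congr 1
    ext ⟨x, y⟩
    simp only [mem_filter, mem_image, Prod.exists, Prod.mk.injEq, not_or]
    constructor
    · rintro ⟨hA, hx, hy⟩
      obtain ⟨a, rfl⟩ := Fin.exists_succAbove_eq hx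
      obtain ⟨b, rfl⟩ := Fin.exists_succAbove_eq hy
      refine ⟨a, b, ?_, rfl, rfl⟩
      rw [mem_A] at hA ⊢
      simp only [ins_succAbove, val_succAbove] at hA
      obtain ⟨h1, h2⟩ := hA
      refine ⟨by split_ifs at h1 <;> omega, ?_⟩
      rcases h2 with ⟨h3, h2⟩ | ⟨h3, h2⟩
      · exact Or.inl ⟨h3, by split_ifs at h2 <;> omega⟩
      · exact Or.inr ⟨h3, by split_ifs at h2 <;> omega⟩
    · rintro ⟨a, b, hA, rfl, rfl⟩
      refine ⟨?_, Fin.succAbove_ne _ _, Fin.succAbove_ne _ _⟩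
      have := h a b (by rw [mem_A] at hA ⊢; simp only [mem_univ, true_and]; tauto)
      rw [mem_A] at hA ⊢
      simp only [ins_succAbove, val_succAbove]
      obtain ⟨h1, h2⟩ := hA
      refine ⟨by split_ifs <;> omega, ?_⟩
      rcases h2 with ⟨h3, h2⟩ | ⟨h3, h2⟩
      · exact Or.inl ⟨h3, by split_ifs <;> omega⟩
      · exact Or.inr ⟨h3, by split_ifs <;> omega⟩
  · rintro ⟨a, b⟩ ⟨c, d⟩ h
    simpa using h

/-- the inserted value. -/
def g {m : ℕ} (ε : Bool) (x : Fin m) : Fin (m+1) := if ε then x.succ else x.castSucc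

lemma val_g {m : ℕ} (ε : Bool) (x : Fin m) : (g ε x : ℕ) = if ε then (x : ℕ) + 1 else x := by
  cases ε <;> simp [g]

lemma val_inj {n : ℕ} (σ : Equiv.Perm (Fin n)) {a b : Fin n} (h : (σ a : ℕ) = σ b) : a = b :=
  σ.injective (Fin.ext h)

lemma succ_succAbove_self {m : ℕ} (i : Fin m) : i.succ.succAbove i = i.castSucc := by
  apply Fin.ext; rw [val_succAbove]; simp

lemma card_infl {m : ℕ} (S : Finset Bool) (ε : Bool) (hε : ε ∈ S) (i : Fin m)
    (σ : Equiv.Perm (Fin m)) (h : ∀ a b, (a, b) ∈ A univ σ → a ≠ i ∧ b ≠ i) :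
    (A S (ins i.succ (g ε (σ i)) σ)).card = (A S σ).card + 1 := by
  have key : ∀ a b : Fin m, (b : ℕ) = a + 1 → ((σ b : ℕ) = σ a + 1 ∨ (σ a : ℕ) = σ b + 1) →
      a ≠ i ∧ b ≠ i := by
    intro a b h1 h2
    apply h a b
    rw [mem_A]; simpa using ⟨h1, h2⟩
  rw [card_stay]
  · congr 1
    rw [Finset.card_eq_one]
    refine ⟨(i.castSucc, i.succ), ?_⟩
    ext ⟨x, y⟩
    simp only [mem_filter, mem_singleton, Prod.mk.injEq]
    constructor
    · rintro ⟨hA, rfl | rfl⟩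
      · exfalso
        by_cases hy : y = i.succ
        · subst hy; rw [mem_A] at hA; omega
        obtain ⟨b, rfl⟩ := Fin.exists_succAbove_eq hy
        rw [mem_A] at hA
        simp only [ins_succAbove, ins_self, val_succAbove, val_g, Fin.val_succ] at hA
        obtain ⟨h1, h2⟩ := hA
        have hb : (b : ℕ) = i + 1 := by split_ifs at h1 <;> omega
        have hne : (σ b : ℕ) ≠ σ i := fun hh => by have := val_inj σ hh; subst this; omega
        refine (key i b hb ?_).1 rfl
        cases ε <;> simp at h2 <;> split_ifs at h2 <;> omega
      · refine ⟨?_, rfl⟩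
        rw [mem_A] at hA
        apply Fin.ext
        have := hA.1
        simp at this ⊢; omega
    · rintro ⟨rfl, rfl⟩
      refine ⟨?_, Or.inr rfl⟩
      rw [mem_A, ← succ_succAbove_self, ins_succAbove, ins_self]
      simp only [val_succAbove, val_g]
      refine ⟨by simp, ?_⟩
      cases ε
      · right; simpa using hε
      · left; simpa using hε
  · intro a b hab
    have h' := h a b hab
    rw [mem_A] at hab
    simp only [mem_univ, true_and] at hab
    obtain ⟨h1, h2⟩ := hab
    constructor
    · simp only [Fin.val_succ]
      intro hb
      exact h'.1 (Fin.ext (by omega))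
    · rw [val_g]
      have ha : (σ a : ℕ) ≠ σ i := fun hh => h'.1 (val_inj σ hh)
      have hb : (σ b : ℕ) ≠ σ i := fun hh => h'.2 (val_inj σ hh)
      split_ifs <;> omega

lemma card_prep {k : ℕ} (S : Finset Bool) (v : Fin (k+2))
    (σ : Equiv.Perm (Fin (k+1)))
    (h : ∀ a b, (a, b) ∈ A univ σ → max (σ a : ℕ) (σ b) ≠ v)
    (h0 : (v : ℕ) ≠ σ 0) (h1 : (v : ℕ) ≠ σ 0 + 1) :
    (A S (ins 0 v σ)).card = (A S σ).card := by
  rw [card_stay]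
  · simp only [Nat.add_eq_left, card_eq_zero]
    ext ⟨x, y⟩
    simp only [mem_filter, notMem_empty, iff_false]
    rintro ⟨hA, rfl | rfl⟩
    · by_cases hy : y = 0
      · subst hy; rw [mem_A] at hA; omega
      obtain ⟨b, rfl⟩ := Fin.exists_succAbove_eq hy
      rw [mem_A] at hA
      simp only [ins_succAbove, ins_self, val_succAbove] at hA
      obtain ⟨h3, h2⟩ := hA
      have hb : b = 0 := by apply Fin.ext; simp at h3 ⊢; exact h3
      subst hb
      split_ifs at h2 <;> omega
    · rw [mem_A] at hA; simp at hA
  · intro a b hab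
    refine ⟨?_, h a b hab⟩
    rw [mem_A] at hab
    simp; intro hb; subst hb; simp at hab

lemma card_eq_sum {m : ℕ} (S : Finset Bool) (π : Equiv.Perm (Fin (m+1))) :
    ((A S π).card : ℝ) = ∑ i : Fin m, ∑ ε ∈ S,
      if (π i.succ : ℕ) = (if ε then (π i.castSucc : ℕ) + 1 else π i.castSucc - 1) ∧
         (ε = false → 1 ≤ (π i.castSucc : ℕ)) then (1 : ℝ) else 0 := by
  rw [← Finset.sum_product', Finset.sum_boole]
  congr 1
  rw [← Finset.card_image_of_injOn (s := Finset.filter _ _)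
    (f := fun q : Fin m × Bool => (q.1.castSucc, q.1.succ))]
  · congr 1
    ext ⟨x, y⟩
    simp only [mem_A, mem_image, mem_filter, mem_product, mem_univ, true_and, Prod.exists,
      Prod.mk.injEq]
    constructor
    · rintro ⟨h1, h2⟩
      have hx : (x : ℕ) < m := by omega
      have hx' : x = (⟨x, hx⟩ : Fin m).castSucc := rfl
      have hy' : y = (⟨x, hx⟩ : Fin m).succ := by apply Fin.ext; simp [h1]
      rw [hy'] at h2
      rcases h2 with h2 | h2
      · exact ⟨⟨x, hx⟩, true, by simpa using h2, rfl, hy'.symm⟩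
      · refine ⟨⟨x, hx⟩, false, ?_, rfl, hy'.symm⟩
        have : (⟨x, hx⟩ : Fin m).castSucc = x := rfl
        rw [this]
        refine ⟨h2.1, ?_, fun _ => by omega⟩
        rw [if_neg (by simp)]
        omega
    · rintro ⟨i, ε, h, rfl, rfl⟩
      refine ⟨by simp, ?_⟩
      cases ε
      · right; simp at h ⊢; exact ⟨h.1, by omega⟩
      · left; simpa using h
  · rintro ⟨i, ε⟩ h ⟨j, δ⟩ h' he
    simp only [coe_filter, mem_product, mem_univ, true_and, Set.mem_ofPred_eq, Prod.mk.injEq] at h h' he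
    have : i = j := by simpa using he.1
    subst this
    cases ε <;> cases δ <;> simp at h h' ⊢ <;> omega

lemma sum_W {m : ℕ} (S : Finset Bool) (f : ℕ → ℝ) :
    ∑ π : Equiv.Perm (Fin (m+1)), ((A S π).card : ℝ) * f (A S π).card =
    ∑ i : Fin m, ∑ ε ∈ S, ∑ σ : Equiv.Perm (Fin m), f (A S (ins i.succ (g ε (σ i)) σ)).card := by
  simp_rw [card_eq_sum, Finset.sum_mul]
  rw [Finset.sum_comm]
  refine Finset.sum_congr rfl fun i _ => ?_
  rw [Finset.sum_comm]
  refine Finset.sum_congr rfl fun ε _ => ?_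
  rw [sum_ins i.succ]
  refine Finset.sum_congr rfl fun σ _ => ?_
  rw [Finset.sum_eq_single (g ε (σ i))]
  · rw [if_pos, one_mul]
    rw [← succ_succAbove_self, ins_succAbove, ins_self, val_succAbove, val_g]
    cases ε <;> simp
  · intro v _ hv
    rw [if_neg, zero_mul]
    rw [← succ_succAbove_self, ins_succAbove, ins_self, val_succAbove]
    intro hh
    apply hv
    apply Fin.ext
    rw [val_g]
    cases ε <;> simp at hh ⊢ <;> split_ifs at hh <;> omega
  · simp

/-- total number of adjacencies over all permutations -/
lemma sum_total (m : ℕ) :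
    ∑ π : Equiv.Perm (Fin (m+1)), ((A univ π).card : ℝ) = 2 * m * m.factorial := by
  have := sum_W (m := m) univ (fun _ => 1)
  simp only [mul_one, Finset.sum_const, Finset.card_univ, Fintype.card_perm, Fintype.card_fin,
    nsmul_eq_mul, Fintype.card_bool] at this
  rw [this]; push_cast; ring

lemma stein_fun (l : ℝ) (hl : 0 ≤ l) : ∃ f : ℕ → ℝ, ∃ B : ℝ, 0 ≤ B ∧ (∀ j, |f j| ≤ B) ∧
    ∀ j : ℕ, (j : ℝ) * f j - l * f (j+1) = 1 - (if j = 0 then Real.exp l else 0) := by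
  have hsum := Real.summable_pow_div_factorial l
  have hexp : Real.exp l = ∑' k : ℕ, l ^ k / (k.factorial : ℝ) := by
    rw [Real.exp_eq_exp_ℝ, NormedSpace.exp_eq_tsum_div]
  have hle : ∀ j k : ℕ, l ^ k * j.factorial / ((k+j+1).factorial : ℝ) ≤ l ^ k / k.factorial := by
    intro j k
    rw [div_le_div_iff₀ (by positivity) (by positivity), mul_assoc]
    gcongr
    have : j.factorial * k.factorial ≤ (k+j+1).factorial := by
      rw [mul_comm]
      exact (Nat.le_of_dvd (Nat.factorial_pos _) (Nat.factorial_mul_factorial_dvd_factorial_add k j)).trans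
        (Nat.factorial_le (by omega))
    exact_mod_cast this
  have hnn : ∀ j k : ℕ, 0 ≤ l ^ k * j.factorial / ((k+j+1).factorial : ℝ) := by
    intro j k; positivity
  have hs : ∀ j : ℕ, Summable fun k : ℕ => l ^ k * j.factorial / ((k+j+1).factorial : ℝ) :=
    fun j => Summable.of_nonneg_of_le (hnn j) (hle j) hsum
  refine ⟨fun j => match j with
    | 0 => 0
    | j+1 => ∑' k : ℕ, l ^ k * j.factorial / ((k+j+1).factorial : ℝ), Real.exp l, by positivity, ?_, ?_⟩
  · rintro (_ | j)
    · simp; positivity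
    · simp only
      rw [abs_of_nonneg (tsum_nonneg (hnn j)), hexp]
      exact (hs j).tsum_le_tsum (hle j) hsum
  · rintro (_ | j)
    · simp only [Nat.cast_zero, zero_mul, zero_add, if_true, zero_sub]
      rw [hexp, hsum.tsum_eq_zero_add, ← tsum_mul_left]
      simp only [pow_zero, Nat.factorial_zero, Nat.cast_one, div_one, mul_one, add_zero]
      rw [show ∀ x : ℝ, 1 - (1 + x) = -x by intro x; ring]
      congr 1
      refine tsum_congr fun k => ?_
      rw [pow_succ]; ring
    · simp only [Nat.add_eq_zero_iff, one_ne_zero, and_false, if_false, sub_zero]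
      rw [(hs j).tsum_eq_zero_add, mul_add, ← tsum_mul_left, ← tsum_mul_left]
      have h1 : ((j+1 : ℕ) : ℝ) * (l ^ 0 * j.factorial / ((0+j+1).factorial : ℝ)) = 1 := by
        rw [zero_add, Nat.factorial_succ]
        push_cast
        have : (j.factorial : ℝ) ≠ 0 := by positivity
        field_simp
      rw [h1, add_sub_assoc]
      convert add_zero (1 : ℝ) using 2
      rw [sub_eq_zero]
      refine tsum_congr fun k => ?_
      rw [show k + 1 + j + 1 = k + (j + 1) + 1 by ring, Nat.factorial_succ j]
      push_cast
      ring

lemma abs_sub_le_bad {x y B : ℝ} {P : Prop} [Decidable P] (hx : |x| ≤ B) (hy : |y| ≤ B) (h : ¬ P → x = y) :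
    |x - y| ≤ 2 * B * (if P then 1 else 0) := by
  split_ifs with hP
  · rw [abs_le] at *; constructor <;> linarith [hx.1, hx.2, hy.1, hy.2]
  · simp [h hP]

lemma step1 {m : ℕ} (S : Finset Bool) (f : ℕ → ℝ) (B : ℝ) (hB : 0 ≤ B) (hf : ∀ j, |f j| ≤ B) :
    |∑ π : Equiv.Perm (Fin (m+1)), ((A S π).card : ℝ) * f (A S π).card
      - S.card * m * ∑ σ : Equiv.Perm (Fin m), f ((A S σ).card + 1)| ≤
    4 * B * S.card * ∑ σ : Equiv.Perm (Fin m), ((A univ σ).card : ℝ) := by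
  have e : (S.card : ℝ) * m * ∑ σ : Equiv.Perm (Fin m), f ((A S σ).card + 1) =
      ∑ i : Fin m, ∑ ε ∈ S, ∑ σ : Equiv.Perm (Fin m), f ((A S σ).card + 1) := by
    simp; ring
  rw [sum_W, e]
  simp_rw [← Finset.sum_sub_distrib]
  calc _ ≤ ∑ i : Fin m, ∑ ε ∈ S, ∑ σ : Equiv.Perm (Fin m),
        2 * B * (if ∃ a b, (a, b) ∈ A univ σ ∧ (a = i ∨ b = i) then (1:ℝ) else 0) := by
        refine (Finset.abs_sum_le_sum_abs _ _).trans (Finset.sum_le_sum fun i _ => ?_)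
        refine (Finset.abs_sum_le_sum_abs _ _).trans (Finset.sum_le_sum fun ε hε => ?_)
        refine (Finset.abs_sum_le_sum_abs _ _).trans (Finset.sum_le_sum fun σ _ => ?_)
        refine abs_sub_le_bad (hf _) (hf _) fun h => ?_
        push Not at h
        rw [card_infl S ε hε i σ h]
    _ = 2 * B * S.card * ∑ σ : Equiv.Perm (Fin m), ∑ i : Fin m,
        (if ∃ a b, (a, b) ∈ A univ σ ∧ (a = i ∨ b = i) then (1:ℝ) else 0) := by
        rw [Finset.sum_comm (s := univ (α := Equiv.Perm (Fin m)))]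
        simp only [Finset.sum_const, ← Finset.mul_sum, nsmul_eq_mul]
        ring
    _ ≤ 2 * B * S.card * ∑ σ : Equiv.Perm (Fin m), (2 * ((A univ σ).card : ℝ)) := by
        gcongr with σ
        rw [Finset.sum_boole]
        have : (univ.filter fun i : Fin m => ∃ a b, (a, b) ∈ A univ σ ∧ (a = i ∨ b = i)) ⊆
            (A univ σ).image Prod.fst ∪ (A univ σ).image Prod.snd := by
          intro i hi
          simp only [mem_filter, mem_univ, true_and] at hi
          obtain ⟨a, b, hab, h⟩ := hi
          simp only [mem_union, mem_image, Prod.exists]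
          rcases h with rfl | rfl
          · exact Or.inl ⟨_, _, hab, rfl⟩
          · exact Or.inr ⟨_, _, hab, rfl⟩
        have h2 := (Finset.card_le_card this).trans (Finset.card_union_le _ _)
        have h3 := Finset.card_image_le (s := A univ σ) (f := Prod.fst)
        have h4 := Finset.card_image_le (s := A univ σ) (f := Prod.snd)
        exact_mod_cast (by omega : _ ≤ 2 * (A univ σ).card)
    _ = _ := by rw [← Finset.mul_sum]; ring

lemma step2 {k : ℕ} (S : Finset Bool) (f : ℕ → ℝ) (B : ℝ) (hB : 0 ≤ B) (hf : ∀ j, |f j| ≤ B) :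
    |∑ π : Equiv.Perm (Fin (k+2)), f ((A S π).card + 1)
      - (k+2) * ∑ σ : Equiv.Perm (Fin (k+1)), f ((A S σ).card + 1)| ≤
    2 * B * ∑ σ : Equiv.Perm (Fin (k+1)), (((A univ σ).card : ℝ) + 2) := by
  have e : ((k : ℝ)+2) * ∑ σ : Equiv.Perm (Fin (k+1)), f ((A S σ).card + 1) =
      ∑ σ : Equiv.Perm (Fin (k+1)), ∑ v : Fin (k+2), f ((A S σ).card + 1) := by
    simp [Finset.mul_sum]
  rw [sum_ins 0, e]
  simp_rw [← Finset.sum_sub_distrib]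
  rw [Finset.mul_sum]
  refine (Finset.abs_sum_le_sum_abs _ _).trans (Finset.sum_le_sum fun σ _ => ?_)
  let P : Fin (k+2) → Prop := fun v => (∃ a b, (a, b) ∈ A univ σ ∧ max (σ a : ℕ) (σ b) = v) ∨
    (v : ℕ) = σ 0 ∨ (v : ℕ) = σ 0 + 1
  calc _ ≤ ∑ v : Fin (k+2), 2 * B * (if P v then (1:ℝ) else 0) := by
        refine (Finset.abs_sum_le_sum_abs _ _).trans (Finset.sum_le_sum fun v _ => ?_)
        refine abs_sub_le_bad (hf _) (hf _) fun h => ?_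
        simp only [P] at h
        push Not at h
        rw [card_prep S v σ h.1 h.2.1 h.2.2]
    _ = 2 * B * ((univ.filter P).card : ℝ) := by
        rw [← Finset.mul_sum, Finset.sum_boole]
    _ ≤ _ := by
        gcongr
        have : univ.filter P ⊆ (A univ σ).image (fun q => (max (σ q.1) (σ q.2)).castSucc) ∪
            {(σ 0).castSucc, (σ 0).succ} := by
          intro v hv
          simp only [mem_filter, mem_univ, true_and, P] at hv
          simp only [mem_union, mem_image, Prod.exists, mem_insert, mem_singleton]
          rcases hv with ⟨a, b, hab, h⟩ | h | h
          · refine Or.inl ⟨a, b, hab, Fin.ext ?_⟩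
            rw [← h]; simp
          · exact Or.inr (Or.inl (Fin.ext (by simpa using h)))
          · exact Or.inr (Or.inr (Fin.ext (by simpa using h)))
        have h2 := (Finset.card_le_card this).trans (Finset.card_union_le _ _)
        have h3 := Finset.card_image_le (s := A univ σ)
          (f := fun q => (max (σ q.1) (σ q.2)).castSucc)
        have h4 := Finset.card_le_two (a := (σ 0).castSucc) (b := (σ 0).succ)
        exact_mod_cast (by omega : _ ≤ (A univ σ).card + 2)

lemma main_est (S : Finset Bool) : ∃ C : ℝ, 0 < C ∧ ∀ n : ℕ, 1 ≤ n →
    |((univ.filter fun π : Equiv.Perm (Fin n) => A S π = ∅).card : ℝ) / n.factorial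
      - Real.exp (-(S.card : ℝ))| ≤ C / n := by
  obtain ⟨f, B, hB, hf, hrec⟩ := stein_fun (S.card : ℝ) (by positivity)
  set l : ℝ := (S.card : ℝ) with hl
  have hl0 : 0 ≤ l := by positivity
  refine ⟨2 + 17 * B * l, by positivity, ?_⟩
  intro n hn
  set N : ℝ := ((univ.filter fun π : Equiv.Perm (Fin n) => A S π = ∅).card : ℝ) with hN
  have hexp1 : Real.exp (-l) ≤ 1 := by rw [Real.exp_le_one_iff]; linarith
  have hexp0 : 0 < Real.exp (-l) := Real.exp_pos _
  obtain rfl | ⟨k, rfl⟩ : n = 1 ∨ ∃ k, n = k + 2 := by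
    rcases n with _ | _ | k
    · omega
    · simp
    · right; exact ⟨k, rfl⟩
  · have h1 : N ≤ 1 := by
      rw [hN]
      have := Finset.card_le_univ (univ.filter fun π : Equiv.Perm (Fin 1) => A S π = ∅)
      rw [Fintype.card_perm] at this
      simp only [Fintype.card_fin, Nat.factorial_one] at this
      exact_mod_cast this
    have h0 : 0 ≤ N := by positivity
    have : 0 ≤ 17 * B * l := by positivity
    rw [abs_le]; simp; constructor <;> linarith
  have hid : ∑ π : Equiv.Perm (Fin (k+2)), ((A S π).card : ℝ) * f (A S π).card
      - l * ∑ π : Equiv.Perm (Fin (k+2)), f ((A S π).card + 1)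
      = (k+2).factorial - Real.exp l * N := by
    rw [Finset.mul_sum, ← Finset.sum_sub_distrib]
    simp_rw [hrec, Finset.card_eq_zero]
    rw [Finset.sum_sub_distrib, ← Finset.sum_filter, Finset.sum_const, Finset.sum_const,
      Finset.card_univ, Fintype.card_perm, Fintype.card_fin]
    simp only [nsmul_eq_mul, mul_one, hN]
    ring
  have s1 := step1 (m := k+1) S f B hB hf
  have s2 := step2 (k := k) S f B hB hf
  rw [← hl] at s1
  have ht := sum_total k
  have hcard : ∑ σ : Equiv.Perm (Fin (k+1)), (2 : ℝ) = 2 * (k+1).factorial := by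
    simp [Fintype.card_perm]; ring
  rw [Finset.sum_add_distrib, hcard] at s2
  have ht' : ∑ π : Equiv.Perm (Fin (k+1)), ((A univ π).card : ℝ) ≤ 2 * (k+1).factorial := by
    rw [ht, Nat.factorial_succ]; push_cast
    have : (0:ℝ) < k.factorial := by positivity
    nlinarith
  set T := ∑ π : Equiv.Perm (Fin (k+1)), ((A univ π).card : ℝ)
  set F := ∑ σ : Equiv.Perm (Fin (k+1)), f ((A S σ).card + 1) with hF
  set G := ∑ π : Equiv.Perm (Fin (k+2)), f ((A S π).card + 1)
  set H := ∑ π : Equiv.Perm (Fin (k+2)), ((A S π).card : ℝ) * f (A S π).card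
  set q : ℝ := ((k+1).factorial : ℝ) with hq
  have hq0 : 0 < q := by positivity
  have hFB : |F| ≤ B * q := by
    calc |F| ≤ ∑ σ : Equiv.Perm (Fin (k+1)), B :=
          (Finset.abs_sum_le_sum_abs _ _).trans (Finset.sum_le_sum fun σ _ => hf _)
      _ = B * q := by simp [Fintype.card_perm, hq]; ring
  have s1' : |H - l * (k+1) * F| ≤ 8 * (B * l * q) := by
    push_cast at s1
    refine s1.trans ?_
    have : B * l * T ≤ B * l * (2 * q) := by gcongr
    linarith
  have s2' : |G - (k+2) * F| ≤ 8 * (B * q) := by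
    refine s2.trans ?_
    have : B * T ≤ B * (2 * q) := by gcongr
    linarith
  have hHG : |H - l * G| ≤ 17 * B * l * q := by
    have e : H - l * G = (H - l * (k+1) * F) - l * (G - (k+2) * F) - l * F := by ring
    rw [e]
    refine (abs_sub _ _).trans ?_
    refine (add_le_add_left (abs_sub _ _) _).trans ?_
    rw [abs_mul, abs_mul, abs_of_nonneg hl0]
    have h1 := mul_le_mul_of_nonneg_left s2' hl0
    have h2 := mul_le_mul_of_nonneg_left hFB hl0
    linarith
  rw [hid] at hHG
  have hfac : ((k+2).factorial : ℝ) = (k+2) * q := by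
    rw [Nat.factorial_succ, hq]; push_cast; ring
  rw [hfac] at hHG ⊢
  have e : N / ((k+2) * q) - Real.exp (-l) =
      - (Real.exp (-l) * ((k+2) * q - Real.exp l * N) / ((k+2) * q)) := by
    have : Real.exp (-l) * Real.exp l = 1 := by rw [← Real.exp_add]; simp
    field_simp
    linear_combination -(N) * this
  rw [e, abs_neg, abs_div, abs_mul, abs_of_pos hexp0, abs_of_pos (by positivity : 0 < ((k:ℝ)+2) * q)]
  push_cast
  rw [div_le_div_iff₀ (by positivity) (by positivity)]
  have : Real.exp (-l) * |(k+2) * q - Real.exp l * N| ≤ 1 * (17 * B * l * q) := by gcongr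
  have h3 : (Real.exp (-l) * |(k+2) * q - Real.exp l * N|) * (k+2) ≤ (1 * (17 * B * l * q)) * (k+2) := by
    gcongr
  have h4 : 0 ≤ 2 * ((k+2) * q) := by positivity
  linarith

lemma up_iff {n : ℕ} (p : Equiv.Perm (Fin n)) : A {true} p = ∅ ↔ ¬ HasUpAdj ⟨n, p⟩ := by
  rw [Finset.eq_empty_iff_forall_notMem]
  simp [HasUpAdj, mem_A]

lemma down_iff {n : ℕ} (p : Equiv.Perm (Fin n)) : A {false} p = ∅ ↔ ¬ HasDownAdj ⟨n, p⟩ := by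
  rw [Finset.eq_empty_iff_forall_notMem]
  simp [HasDownAdj, mem_A]

lemma both_iff {n : ℕ} (p : Equiv.Perm (Fin n)) :
    A univ p = ∅ ↔ ¬ HasUpAdj ⟨n, p⟩ ∧ ¬ HasDownAdj ⟨n, p⟩ := by
  rw [← up_iff, ← down_iff]
  simp only [Finset.eq_empty_iff_forall_notMem, Prod.forall, mem_A]
  simp
  grind

lemma count (n : ℕ) : (numOpposing n : ℝ) = n.factorial
    - ((univ.filter fun π : Equiv.Perm (Fin n) => A {true} π = ∅).card : ℝ)
    - ((univ.filter fun π : Equiv.Perm (Fin n) => A {false} π = ∅).card : ℝ)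
    + ((univ.filter fun π : Equiv.Perm (Fin n) => A univ π = ∅).card : ℝ) := by
  have hc : ((n.factorial : ℕ) : ℝ) = ∑ π : Equiv.Perm (Fin n), (1 : ℝ) := by
    simp [Fintype.card_perm]
  rw [hc, numOpposing]
  simp_rw [up_iff, down_iff, both_iff]
  simp_rw [← Finset.sum_boole]
  rw [← Finset.sum_sub_distrib, ← Finset.sum_sub_distrib, ← Finset.sum_add_distrib]
  refine Finset.sum_congr rfl fun p _ => ?_
  by_cases h1 : HasUpAdj ⟨n, p⟩ <;> by_cases h2 : HasDownAdj ⟨n, p⟩ <;> simp [h1, h2]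

end OppAdj

/-- **(Lemma `lem-incdec`.)**  `s_n/n! = (1 − 1/e)² + O(1/n)`: there is a
constant `C > 0` with `|s_n/n! − (1 − 1/e)²| ≤ C/n` for all `n ≥ 1`. -/
theorem opposing_adjacency_density :
    ∃ C : ℝ, 0 < C ∧ ∀ n : ℕ, 1 ≤ n →
      |(numOpposing n : ℝ) / (Nat.factorial n : ℝ) - (1 - 1 / Real.exp 1) ^ 2| ≤ C / n := by
  obtain ⟨C1, hC1, h1⟩ := OppAdj.main_est {true}
  obtain ⟨C2, hC2, h2⟩ := OppAdj.main_est {false}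
  obtain ⟨C3, hC3, h3⟩ := OppAdj.main_est Finset.univ
  refine ⟨C1 + C2 + C3, by positivity, fun n hn => ?_⟩
  have h1 := h1 n hn
  have h2 := h2 n hn
  have h3 := h3 n hn
  have e1 : Real.exp (-((Finset.card {true} : ℕ) : ℝ)) = 1 / Real.exp 1 := by
    simp [Real.exp_neg]
  have e2 : Real.exp (-((Finset.card {false} : ℕ) : ℝ)) = 1 / Real.exp 1 := by
    simp [Real.exp_neg]
  have e3 : Real.exp (-((Finset.card (Finset.univ : Finset Bool) : ℕ) : ℝ)) =
      (1 / Real.exp 1) ^ 2 := by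
    rw [one_div, ← Real.exp_neg, ← Real.exp_nat_mul]
    simp
  rw [e1] at h1
  rw [e2] at h2
  rw [e3] at h3
  have hf : (n.factorial : ℝ) ≠ 0 := by positivity
  rw [OppAdj.count, add_div, sub_div, sub_div, div_self hf, add_div, add_div]
  rw [abs_le] at *
  constructor <;> linarith [h1.1, h1.2, h2.1, h2.2, h3.1, h3.2]
end

section
/- There exists a constant C > 0 such that for every n ≥ 1, the proportion of permutations π of length n satisfying μ(1,π) = 0 is at least (1 − 1/e)² − C/n. In particular, the liminf as n → ∞ of the proportion of permutations of length n with principal Möbius function equal to zero is at least (1 − 1/e)² ≥ 0.3995. -/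
/-!
The permutation pattern poset and its Möbius function.

A permutation of length `n` is represented as an element of the symmetric
group on `Fin n`; the collection of all permutations of all lengths is the
sigma type `PPerm`.  Pattern containment `PPerm.Le` makes `PPerm` into the
permutation pattern poset, and `mu` is its Möbius function, defined by the
usual recursion `μ(σ,σ) = 1`, `μ(σ,π) = -∑_{σ ≤ λ < π} μ(σ,λ)` for `σ < π`
and `μ(σ,π) = 0` otherwise.
-/

open scoped Classical

/-- The proportion of permutations of length `n` whose principal Möbius
function is zero. -/
noncomputable def zeroDensity (n : ℕ) : ℝ :=
  ((Finset.univ.filter fun p : Equiv.Perm (Fin n) =>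
      mu PPerm.one ⟨n, p⟩ = 0).card : ℝ) / (Nat.factorial n : ℝ)

/-! ### Part I: opposing adjacencies force `μ(1,π) = 0` -/

namespace MobZero

theorem muAux_fuel (σ : PPerm) : ∀ (k k' : ℕ) (π : PPerm), π.1 + 1 ≤ k → π.1 + 1 ≤ k' →
    muAux k σ π = muAux k' σ π := by
  intro k
  induction k with
  | zero => intro k' π h; omega
  | succ k ih =>
    intro k' π h h'
    obtain ⟨k', rfl⟩ : ∃ l, k' = l + 1 := ⟨k' - 1, by omega⟩
    simp only [muAux]
    have : ∑ m ∈ Finset.range π.1,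
          ∑ p ∈ Finset.univ.filter
              (fun p : Equiv.Perm (Fin m) => PPerm.Le σ ⟨m, p⟩ ∧ PPerm.Le ⟨m, p⟩ π),
            muAux k σ ⟨m, p⟩ = ∑ m ∈ Finset.range π.1,
          ∑ p ∈ Finset.univ.filter
              (fun p : Equiv.Perm (Fin m) => PPerm.Le σ ⟨m, p⟩ ∧ PPerm.Le ⟨m, p⟩ π),
            muAux k' σ ⟨m, p⟩ := by
      refine Finset.sum_congr rfl fun m hm => Finset.sum_congr rfl fun p _ => ?_
      rw [Finset.mem_range] at hm
      exact ih k' ⟨m, p⟩ (by simp only; omega) (by simp only; omega)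
    rw [this]

/-- principal Möbius function -/
noncomputable def M (π : PPerm) : ℤ := mu PPerm.one π

theorem one_le {π : PPerm} (h : 1 ≤ π.1) : PPerm.Le PPerm.one π := by
  refine ⟨fun _ => ⟨0, h⟩, ?_, ?_⟩
  · intro a b hab
    have ha := a.2; have hb := b.2
    simp only [PPerm.one] at ha hb
    have : (a : ℕ) < b := hab
    omega
  · intro a b
    have h1 : a = b := by
      have ha := a.2; have hb := b.2
      simp only [PPerm.one] at ha hb
      exact Fin.ext (by omega)
    subst h1; simp

theorem le_len {σ π : PPerm} (h : PPerm.Le σ π) : σ.1 ≤ π.1 := by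
  obtain ⟨f, hf, _⟩ := h
  simpa using Fintype.card_le_of_injective f hf.injective

theorem M_zero (p : Equiv.Perm (Fin 0)) : M ⟨0, p⟩ = 0 := by
  have h1 : PPerm.one ≠ ⟨0, p⟩ := by
    intro h; have := congrArg Sigma.fst h; simp [PPerm.one] at this
  have h2 : ¬ PPerm.Le PPerm.one ⟨0, p⟩ := by
    intro h; have := le_len h; simp [PPerm.one] at this
  simp [M, mu, muAux, h1, h2]

/-- truncated sum below `ρ` -/
noncomputable def G (N : ℕ) (ρ : PPerm) : ℤ :=
  ∑ m ∈ Finset.range N, ∑ p : Equiv.Perm (Fin m), if PPerm.Le ⟨m, p⟩ ρ then M ⟨m, p⟩ else 0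

theorem M_eq (ρ : PPerm) (h : 2 ≤ ρ.1) : M ρ = - G ρ.1 ρ := by
  have h1 : PPerm.one ≠ ρ := by
    rintro rfl; simp [PPerm.one] at h
  have h2 : PPerm.Le PPerm.one ρ := one_le (by omega)
  rw [M, mu, muAux, if_neg h1, if_pos h2, G]
  congr 1
  refine Finset.sum_congr rfl fun m hm => ?_
  rw [Finset.mem_range] at hm
  rw [Finset.sum_filter]
  refine Finset.sum_congr rfl fun p _ => ?_
  rcases Nat.eq_zero_or_pos m with rfl | hm0
  · have : ¬ PPerm.Le PPerm.one ⟨0, p⟩ := by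
      intro h; have := le_len h; simp [PPerm.one] at this
    simp [this, M_zero]
  · have : PPerm.Le PPerm.one ⟨m, p⟩ := one_le hm0
    simp only [this, true_and, M, mu]
    split_ifs
    · exact muAux_fuel _ _ _ _ (by simp only; omega) (by simp)
    · rfl

theorem le_same {n : ℕ} (p q : Equiv.Perm (Fin n)) : PPerm.Le ⟨n, p⟩ ⟨n, q⟩ ↔ p = q := by
  constructor
  · rintro ⟨f, hf, h⟩
    simp only at f hf h
    have hid : f = id := by
      have hb : Function.Bijective f := Finite.injective_iff_bijective.mp hf.injective
      have := Subsingleton.elim (hf.orderIsoOfSurjective f hb.2) (OrderIso.refl _)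
      funext x
      exact congrArg (fun e : Fin n ≃o Fin n => e x) this
    subst hid
    simp only [id] at h
    have hm : StrictMono (fun x => q (p.symm x)) := by
      intro a b hab
      rw [← h]; simpa using hab
    have := Subsingleton.elim (hm.orderIsoOfSurjective _ (q.surjective.comp p.symm.surjective))
      (OrderIso.refl _)
    ext x
    have := congrArg (fun e : Fin n ≃o Fin n => e (p x)) this
    simp at this
    rw [this]
  · rintro rfl
    exact ⟨id, strictMono_id, fun _ _ => Iff.rfl⟩

theorem G_zero (ρ : PPerm) (h : 2 ≤ ρ.1) (N : ℕ) (hN : ρ.1 < N) : G N ρ = 0 := by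
  induction N, hN using Nat.le_induction with
  | base =>
    rw [G, Finset.sum_range_succ, ← G]
    have : ∀ p : Equiv.Perm (Fin ρ.1), PPerm.Le ⟨ρ.1, p⟩ ρ ↔ p = ρ.2 := fun p => le_same p ρ.2
    simp only [this]
    rw [Finset.sum_ite_eq' Finset.univ ρ.2, if_pos (Finset.mem_univ _)]
    have := M_eq ρ h
    have e : M ⟨ρ.1, ρ.2⟩ = M ρ := rfl
    rw [e, this]; ring
  | succ N hN ih =>
    rw [G, Finset.sum_range_succ, ← G, ih, zero_add]
    refine Finset.sum_eq_zero fun p _ => ?_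
    rw [if_neg]
    intro hl
    have := le_len hl
    simp only at this
    omega

/-- embeddings -/
def Emb {m n : ℕ} (l : Equiv.Perm (Fin m)) (π : Equiv.Perm (Fin n)) (f : Fin m → Fin n) : Prop :=
  StrictMono f ∧ ∀ a b, l a < l b ↔ π (f a) < π (f b)

theorem exists_pattern {n : ℕ} (π : Equiv.Perm (Fin n)) (S : Finset (Fin n)) :
    ∃ ρ : Equiv.Perm (Fin S.card), ∀ (m : ℕ) (l : Equiv.Perm (Fin m)),
      PPerm.Le ⟨m, l⟩ ⟨S.card, ρ⟩ ↔ ∃ f : Fin m → Fin n, Emb l π f ∧ ∀ a, f a ∈ S := by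
  let e := S.orderIsoOfFin rfl
  let e2 := (S.map π.toEmbedding).orderIsoOfFin (Finset.card_map _)
  let r : S ≃ (S.map π.toEmbedding : Finset (Fin n)) :=
    Equiv.subtypeEquiv π (by intro a; simp)
  let ρ : Equiv.Perm (Fin S.card) := e.toEquiv.trans (r.trans e2.symm.toEquiv)
  have hρ : ∀ a b, ρ a < ρ b ↔ π (e a) < π (e b) := by
    intro a b
    change e2.symm (r (e a)) < e2.symm (r (e b)) ↔ _
    rw [OrderIso.lt_iff_lt]
    rfl
  refine ⟨ρ, fun m l => ?_⟩
  constructor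
  · rintro ⟨f, hf, h⟩
    refine ⟨fun a => e (f a), ⟨?_, ?_⟩, fun a => (e (f a)).2⟩
    · intro a b hab
      exact e.strictMono (hf hab)
    · intro a b
      rw [← hρ]; exact h a b
  · rintro ⟨f, ⟨hf, h⟩, hS⟩
    refine ⟨fun a => e.symm ⟨f a, hS a⟩, ?_, ?_⟩
    · intro a b hab
      exact e.symm.strictMono (hf hab)
    · intro a b
      change l a < l b ↔ ρ _ < ρ _
      rw [hρ, h]
      simp

/-- Replace the point `b` by its twin `a` -/
theorem fix {m n : ℕ} {l : Equiv.Perm (Fin m)} {π : Equiv.Perm (Fin n)} {f : Fin m → Fin n}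
    (hf : Emb l π f) {a b : Fin n} (hab : (b : ℕ) = a + 1)
    (hv : (π b : ℕ) = π a + 1 ∨ (π a : ℕ) = π b + 1)
    (hmiss : (∀ x, f x ≠ a) ∨ (∀ x, f x ≠ b)) :
    ∃ f', Emb l π f' ∧ (∀ x, f' x ≠ b) ∧ ∀ c, c ≠ a → (∀ x, f x ≠ c) → ∀ x, f' x ≠ c := by
  by_cases hb : ∀ x, f x ≠ b
  · exact ⟨f, hf, hb, fun c _ h => h⟩
  have ha : ∀ x, f x ≠ a := by tauto
  have hne : a ≠ b := by rintro rfl; omega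
  let r : Fin n → Fin n := fun x => if x = b then a else x
  have hr : ∀ x y, x ≠ a → y ≠ a → x < y → r x < r y := by
    intro x y hx hy hxy
    simp only [r]
    rw [Fin.ne_iff_vne] at hx hy
    split_ifs with h1 h2 h2
    · subst h1 h2; exact absurd hxy (lt_irrefl _)
    · subst h1; rw [Fin.lt_def] at *; omega
    · subst h2; rw [Fin.lt_def] at *; omega
    · exact hxy
  have hr2 : ∀ x y, x ≠ a → y ≠ a → π x < π y → π (r x) < π (r y) := by
    intro x y hx hy hxy
    simp only [r]
    have hx : π x ≠ π a := fun h => hx (π.injective h)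
    have hy : π y ≠ π a := fun h => hy (π.injective h)
    rw [Fin.ne_iff_vne] at hx hy
    split_ifs with h1 h2 h2
    · subst h1 h2; exact absurd hxy (lt_irrefl _)
    · subst h1; rw [Fin.lt_def] at *; omega
    · subst h2; rw [Fin.lt_def] at *; omega
    · exact hxy
  refine ⟨fun x => r (f x), ⟨?_, ?_⟩, ?_, ?_⟩
  · intro x y hxy
    exact hr _ _ (ha x) (ha y) (hf.1 hxy)
  · intro x y
    rw [hf.2]
    refine ⟨hr2 _ _ (ha x) (ha y), fun h => ?_⟩
    rcases lt_trichotomy (π (f x)) (π (f y)) with h1 | h1 | h1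
    · exact h1
    · have := π.injective h1
      simp only [this] at h; exact absurd h (lt_irrefl _)
    · exact absurd h (lt_asymm (hr2 _ _ (ha y) (ha x) h1))
  · intro x; simp only [r]; split_ifs with h1
    · exact hne
    · exact h1
  · intro c hc hfc x; simp only [r]; split_ifs with h1
    · exact hc.symm
    · exact hfc x

/-- increasing adjacency -/
def HasInc {n : ℕ} (π : Equiv.Perm (Fin n)) : Prop :=
  ∃ a b : Fin n, (b : ℕ) = a + 1 ∧ (π b : ℕ) = π a + 1

/-- decreasing adjacency -/
def HasDec {n : ℕ} (π : Equiv.Perm (Fin n)) : Prop :=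
  ∃ a b : Fin n, (b : ℕ) = a + 1 ∧ (π a : ℕ) = π b + 1

theorem succ_of_lt {m : ℕ} (x y : Fin m) (h : x < y) (h2 : ∀ z, x < z → z < y → False) :
    (y : ℕ) = x + 1 := by
  by_contra hne
  rw [Fin.lt_def] at h
  exact h2 ⟨x + 1, by omega⟩ (by rw [Fin.lt_def]; simp) (by rw [Fin.lt_def]; simp only; omega)

theorem emb_pos {m n : ℕ} {l : Equiv.Perm (Fin m)} {π : Equiv.Perm (Fin n)} {f : Fin m → Fin n}
    (hf : Emb l π f) {x y : Fin m} (h : (f y : ℕ) = f x + 1) : (y : ℕ) = x + 1 := by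
  refine succ_of_lt x y (hf.1.lt_iff_lt.mp (by rw [Fin.lt_def]; omega)) fun z h1 h2 => ?_
  have h1 := hf.1 h1
  have h2 := hf.1 h2
  rw [Fin.lt_def] at *; omega

theorem emb_val {m n : ℕ} {l : Equiv.Perm (Fin m)} {π : Equiv.Perm (Fin n)} {f : Fin m → Fin n}
    (hf : Emb l π f) {x y : Fin m} (h : (π (f y) : ℕ) = π (f x) + 1) : (l y : ℕ) = l x + 1 := by
  refine succ_of_lt _ _ ((hf.2 _ _).mpr (by rw [Fin.lt_def]; omega)) fun z h1 h2 => ?_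
  obtain ⟨z, rfl⟩ := l.surjective z
  rw [hf.2, Fin.lt_def] at *; omega

theorem ite_aux {P A B D : Prop} (c : ℤ) (i1 : P → A ∨ B) (i2 : A → B → D) (i3 : D → A ∧ B)
    (i4 : A → P) (i5 : B → P) :
    (if P then c else 0) = (if A then c else 0) + (if B then c else 0) - (if D then c else 0) := by
  by_cases A <;> by_cases B <;> by_cases P <;> by_cases D <;> simp_all

theorem mu_zero : ∀ (n : ℕ) (π : Equiv.Perm (Fin n)), HasInc π → HasDec π → M ⟨n, π⟩ = 0 := by
  intro n
  induction n using Nat.strong_induction_on with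
  | _ n ih =>
  rintro π ⟨a1, b1, h1, v1⟩ ⟨a2, b2, h2, v2⟩
  have d1 : (a1 : ℕ) ≠ a2 := by
    intro h
    have e1 : a1 = a2 := Fin.ext h
    have e2 : b1 = b2 := Fin.ext (by omega)
    subst e1 e2; omega
  have d2 : (a1 : ℕ) ≠ b2 := by
    intro h
    have e1 : a1 = b2 := Fin.ext h
    subst e1
    have : b1 = a2 := π.injective (Fin.ext (by omega))
    subst this; omega
  have d3 : (a2 : ℕ) ≠ b1 := by
    intro h
    have e1 : a2 = b1 := Fin.ext h
    subst e1
    have : a1 = b2 := π.injective (Fin.ext (by omega))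
    subst this; omega
  have n4 : 4 ≤ n := by have := b1.2; have := b2.2; omega
  have n12 : b1 ≠ b2 := by intro h; subst h; omega
  have c1 : ({b1}ᶜ : Finset (Fin n)).card = n - 1 := by simp [Finset.card_compl]
  have c2 : ({b2}ᶜ : Finset (Fin n)).card = n - 1 := by simp [Finset.card_compl]
  have c3 : ({b1, b2}ᶜ : Finset (Fin n)).card = n - 2 := by
    rw [Finset.card_compl, Finset.card_pair n12]; simp
  obtain ⟨ρ1, hρ1⟩ := exists_pattern π {b1}ᶜ
  obtain ⟨ρ2, hρ2⟩ := exists_pattern π {b2}ᶜ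
  obtain ⟨ρ3, hρ3⟩ := exists_pattern π {b1, b2}ᶜ
  have g1 : G n ⟨_, ρ1⟩ = 0 := G_zero _ (by simp only; omega) _ (by simp only; omega)
  have g2 : G n ⟨_, ρ2⟩ = 0 := G_zero _ (by simp only; omega) _ (by simp only; omega)
  have g3 : G n ⟨_, ρ3⟩ = 0 := G_zero _ (by simp only; omega) _ (by simp only; omega)
  have key : G n ⟨n, π⟩ = G n ⟨_, ρ1⟩ + G n ⟨_, ρ2⟩ - G n ⟨_, ρ3⟩ := by
    simp only [G]
    rw [← Finset.sum_add_distrib, ← Finset.sum_sub_distrib]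
    refine Finset.sum_congr rfl fun m hm => ?_
    rw [Finset.mem_range] at hm
    rw [← Finset.sum_add_distrib, ← Finset.sum_sub_distrib]
    refine Finset.sum_congr rfl fun l _ => ?_
    by_cases hM : M ⟨m, l⟩ = 0
    · simp [hM]
    have hno : ¬ (HasInc l ∧ HasDec l) := fun h => hM (ih m hm l h.1 h.2)
    have hP : PPerm.Le ⟨m, l⟩ ⟨n, π⟩ ↔ ∃ f : Fin m → Fin n, Emb l π f := Iff.rfl
    have hI : ∀ f, Emb l π f → ¬ ((∀ x, f x ≠ a1) ∨ (∀ x, f x ≠ b1)) → HasInc l := by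
      intro f hf h
      push Not at h
      obtain ⟨⟨x, rfl⟩, ⟨y, rfl⟩⟩ := h
      exact ⟨x, y, emb_pos hf h1, emb_val hf v1⟩
    have hD : ∀ f, Emb l π f → ¬ ((∀ x, f x ≠ a2) ∨ (∀ x, f x ≠ b2)) → HasDec l := by
      intro f hf h
      push Not at h
      obtain ⟨⟨x, rfl⟩, ⟨y, rfl⟩⟩ := h
      exact ⟨x, y, emb_pos hf h2, emb_val hf v2⟩
    have e1 := hρ1 m l
    have e2 := hρ2 m l
    have e3 := hρ3 m l
    simp only [Finset.mem_compl, Finset.mem_singleton, Finset.mem_insert, not_or] at e1 e2 e3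
    have i1 : PPerm.Le ⟨m, l⟩ ⟨n, π⟩ →
        PPerm.Le ⟨m, l⟩ ⟨_, ρ1⟩ ∨ PPerm.Le ⟨m, l⟩ ⟨_, ρ2⟩ := by
      rw [hP, e1, e2]
      rintro ⟨f, hf⟩
      by_cases k1 : (∀ x, f x ≠ a1) ∨ (∀ x, f x ≠ b1)
      · obtain ⟨f', q1, q2, _⟩ := fix hf h1 (Or.inl v1) k1
        exact Or.inl ⟨f', q1, q2⟩
      by_cases k2 : (∀ x, f x ≠ a2) ∨ (∀ x, f x ≠ b2)
      · obtain ⟨f', q1, q2, _⟩ := fix hf h2 (Or.inr v2) k2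
        exact Or.inr ⟨f', q1, q2⟩
      exact absurd ⟨hI f hf k1, hD f hf k2⟩ hno
    have i2 : PPerm.Le ⟨m, l⟩ ⟨_, ρ1⟩ → PPerm.Le ⟨m, l⟩ ⟨_, ρ2⟩ → PPerm.Le ⟨m, l⟩ ⟨_, ρ3⟩ := by
      rw [e1, e2, e3]
      rintro ⟨f, hf, hfb⟩ ⟨g, hg, hgb⟩
      by_cases k2 : (∀ x, f x ≠ a2) ∨ (∀ x, f x ≠ b2)
      · obtain ⟨f', q1, q2, q3⟩ := fix hf h2 (Or.inr v2) k2
        exact ⟨f', q1, fun x => ⟨q3 b1 (by intro h; subst h; omega) hfb x, q2 x⟩⟩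
      by_cases k1 : (∀ x, g x ≠ a1) ∨ (∀ x, g x ≠ b1)
      · obtain ⟨f', q1, q2, q3⟩ := fix hg h1 (Or.inl v1) k1
        exact ⟨f', q1, fun x => ⟨q2 x, q3 b2 (by intro h; subst h; omega) hgb x⟩⟩
      exact absurd ⟨hI g hg k1, hD f hf k2⟩ hno
    have i3 : PPerm.Le ⟨m, l⟩ ⟨_, ρ3⟩ → PPerm.Le ⟨m, l⟩ ⟨_, ρ1⟩ ∧ PPerm.Le ⟨m, l⟩ ⟨_, ρ2⟩ := by
      rw [e1, e2, e3]
      rintro ⟨f, hf, hfb⟩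
      exact ⟨⟨f, hf, fun x => (hfb x).1⟩, ⟨f, hf, fun x => (hfb x).2⟩⟩
    have i4 : PPerm.Le ⟨m, l⟩ ⟨_, ρ1⟩ → PPerm.Le ⟨m, l⟩ ⟨n, π⟩ := by
      rw [e1, hP]; rintro ⟨f, hf, _⟩; exact ⟨f, hf⟩
    have i5 : PPerm.Le ⟨m, l⟩ ⟨_, ρ2⟩ → PPerm.Le ⟨m, l⟩ ⟨n, π⟩ := by
      rw [e2, hP]; rintro ⟨f, hf, _⟩; exact ⟨f, hf⟩
    exact ite_aux _ i1 i2 i3 i4 i5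
  rw [M_eq _ (by simp only; omega)]
  simp only
  rw [key, g1, g2, g3]; rfl

/-! ### Part II: counting adjacencies -/

/-- number of increasing adjacencies -/
noncomputable def X {m : ℕ} (π : Equiv.Perm (Fin (m + 1))) : ℕ :=
  ∑ s : Fin m, if (π s.succ : ℕ) = π s.castSucc + 1 then 1 else 0

/-- number of decreasing adjacencies -/
noncomputable def Y {m : ℕ} (π : Equiv.Perm (Fin (m + 1))) : ℕ :=
  ∑ s : Fin m, if (π s.castSucc : ℕ) = π s.succ + 1 then 1 else 0

/-- inflate the point at position `i` into an increasing adjacency -/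
def infl {m : ℕ} (σ : Equiv.Perm (Fin m)) (i : Fin m) : Equiv.Perm (Fin (m + 1)) :=
  (finSuccEquiv' i.succ).trans ((Equiv.optionCongr σ).trans (finSuccEquiv' (σ i).succ).symm)

theorem infl_at {m : ℕ} (σ : Equiv.Perm (Fin m)) (i : Fin m) : infl σ i i.succ = (σ i).succ := by
  simp [infl]

theorem infl_above {m : ℕ} (σ : Equiv.Perm (Fin m)) (i x : Fin m) :
    infl σ i (i.succ.succAbove x) = (σ i).succ.succAbove (σ x) := by
  simp [infl]

theorem succAbove_succ_val {m : ℕ} (v w : Fin m) :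
    (v.succ.succAbove w : ℕ) = if (w : ℕ) ≤ v then (w : ℕ) else w + 1 := by
  unfold Fin.succAbove
  simp only [Fin.lt_def, Fin.val_castSucc, Fin.val_succ]
  split_ifs <;> simp <;> omega

theorem infl_lo {m : ℕ} (σ : Equiv.Perm (Fin m)) (i x : Fin m) (h : (x : ℕ) ≤ i) :
    (infl σ i x.castSucc : ℕ) = if (σ x : ℕ) ≤ σ i then (σ x : ℕ) else σ x + 1 := by
  rw [← succAbove_succ_val, ← infl_above]
  congr 2
  apply Fin.ext
  rw [succAbove_succ_val, if_pos h]; simp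

theorem infl_hi {m : ℕ} (σ : Equiv.Perm (Fin m)) (i x : Fin m) (h : (i : ℕ) < x) :
    (infl σ i x.succ : ℕ) = if (σ x : ℕ) ≤ σ i then (σ x : ℕ) else σ x + 1 := by
  rw [← succAbove_succ_val, ← infl_above]
  congr 2
  apply Fin.ext
  rw [succAbove_succ_val, if_neg (by omega)]; simp

theorem infl_inj {m : ℕ} (i : Fin m) : Function.Injective (fun σ => infl σ i) := by
  intro σ τ h
  have h0 : σ i = τ i := by
    have := congrArg (fun π : Equiv.Perm (Fin (m + 1)) => π i.succ) h
    simpa [infl_at] using this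
  ext x
  have := congrArg (fun π : Equiv.Perm (Fin (m + 1)) => π (i.succ.succAbove x)) h
  simp only [infl_above, h0] at this
  rw [Fin.succAbove_right_injective this]

theorem infl_surj {m : ℕ} (i : Fin m) (π : Equiv.Perm (Fin (m + 1)))
    (h : (π i.succ : ℕ) = π i.castSucc + 1) : ∃ σ, infl σ i = π := by
  let E : Option (Fin m) ≃ Option (Fin m) :=
    (finSuccEquiv' i.succ).symm.trans (π.trans (finSuccEquiv' (π i.succ)))
  have hE : E none = none := by simp [E]
  let σ := Equiv.removeNone E
  have hσ : Equiv.optionCongr σ = E := by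
    ext1 x
    cases x with
    | none => simp [hE]
    | some x =>
      have : E (some x) ≠ none := by
        intro hx
        have := E.injective (hx.trans hE.symm)
        simp at this
      simp only [Equiv.optionCongr_apply, Option.map_some, σ]
      exact Equiv.removeNone_some E (Option.ne_none_iff_exists'.mp this)
  have hx : ∀ x, π (i.succ.succAbove x) = (π i.succ).succAbove (σ x) := by
    intro x
    have h1 : E (some x) = some (σ x) := by rw [← hσ]; simp
    simp only [E, Equiv.trans_apply, finSuccEquiv'_symm_some] at h1
    exact finSuccEquiv'_eq_some.mp h1
  have hi : π i.succ = (σ i).succ := by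
    have h1 := hx i
    have e : i.succ.succAbove i = i.castSucc := Fin.ext (by rw [succAbove_succ_val]; simp)
    rw [e] at h1
    apply Fin.ext
    have h2 := congrArg Fin.val h1
    unfold Fin.succAbove at h2
    simp only [Fin.lt_def, Fin.val_castSucc] at h2
    rw [Fin.val_succ]
    split_ifs at h2
    · simp at h2; omega
    · simp at h2; omega
  refine ⟨σ, ?_⟩
  ext1 x
  rcases Fin.eq_self_or_eq_succAbove i.succ x with rfl | ⟨y, rfl⟩
  · rw [infl_at, hi]
  · rw [infl_above, hx, hi]

theorem sum_inc {m : ℕ} (i : Fin m) (F : Equiv.Perm (Fin (m + 1)) → ℕ) :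
    ∑ π : Equiv.Perm (Fin (m + 1)), (if (π i.succ : ℕ) = π i.castSucc + 1 then F π else 0)
      = ∑ σ : Equiv.Perm (Fin m), F (infl σ i) := by
  rw [← Finset.sum_filter]
  symm
  refine Finset.sum_bij (fun σ _ => infl σ i) ?_ ?_ ?_ ?_
  · intro σ _
    simp only [Finset.mem_filter, Finset.mem_univ, true_and]
    rw [infl_at, infl_lo _ _ _ le_rfl]; simp
  · intro a _ b _ h; exact infl_inj i h
  · intro π hπ
    simp only [Finset.mem_filter, Finset.mem_univ, true_and] at hπ
    obtain ⟨σ, hσ⟩ := infl_surj i π hπ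
    exact ⟨σ, Finset.mem_univ _, hσ⟩
  · intros; rfl

/-- values of the inflated permutation around an old slot -/
theorem infl_slot {l : ℕ} (σ : Equiv.Perm (Fin (l + 1))) (i : Fin (l + 1)) (s : Fin l) :
    (((infl σ i (i.succAbove s).succ : ℕ) = infl σ i (i.succAbove s).castSucc + 1) ↔
      ((σ s.succ : ℕ) = σ s.castSucc + 1)) ∧
    (((infl σ i (i.succAbove s).castSucc : ℕ) = infl σ i (i.succAbove s).succ + 1) ↔
      ((σ s.castSucc : ℕ) = σ s.succ + 1) ∧ (s : ℕ) ≠ i ∧ (s : ℕ) + 1 ≠ i) := by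
  have inj : ∀ x : Fin (l + 1), (x : ℕ) ≠ i → (σ x : ℕ) ≠ σ i := by
    intro x hx h
    exact hx (congrArg Fin.val (σ.injective (Fin.ext h)))
  have hne : (σ s.succ : ℕ) ≠ σ s.castSucc := by
    intro h
    have := congrArg Fin.val (σ.injective (Fin.ext h))
    simp at this
  by_cases hs : s.castSucc < i
  · rw [Fin.succAbove_of_castSucc_lt _ _ hs]
    rw [Fin.lt_def, Fin.val_castSucc] at hs
    rw [Fin.succ_castSucc, infl_lo _ _ _ (by simp; omega), infl_lo _ _ _ (by simp; omega)]
    have j1 := inj s.castSucc (by simp; omega)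
    by_cases h2 : (s : ℕ) + 1 = i
    · have e : s.succ = i := Fin.ext (by simpa using h2)
      rw [e] at *
      constructor <;> split_ifs <;> omega
    · have j2 := inj s.succ (by simpa using h2)
      constructor <;> split_ifs <;> omega
  · rw [Fin.succAbove_of_le_castSucc _ _ (not_lt.mp hs)]
    rw [Fin.lt_def, Fin.val_castSucc] at hs
    rw [← Fin.succ_castSucc, infl_hi _ _ _ (by simp; omega)]
    have j2 := inj s.succ (by simp; omega)
    by_cases h2 : (s : ℕ) = i
    · have e : s.castSucc = i := Fin.ext (by simpa using h2)
      rw [e] at *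
      rw [infl_at, Fin.val_succ]
      constructor <;> split_ifs <;> omega
    · have j1 := inj s.castSucc (by simpa using h2)
      rw [infl_hi _ _ _ (by simp; omega)]
      constructor <;> split_ifs <;> omega

theorem X_infl {l : ℕ} (σ : Equiv.Perm (Fin (l + 1))) (i : Fin (l + 1)) :
    X (infl σ i) = X σ + 1 := by
  rw [X, Fin.sum_univ_succAbove _ i, infl_at, infl_lo _ _ _ le_rfl]
  simp only [le_refl, if_true, Fin.val_succ, X]
  rw [add_comm]
  congr 1
  refine Finset.sum_congr rfl fun s _ => ?_
  simp only [(infl_slot σ i s).1]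

/-- decreasing adjacencies of `σ` touching position `i` -/
noncomputable def dd {l : ℕ} (σ : Equiv.Perm (Fin (l + 1))) (i : Fin (l + 1)) : ℕ :=
  ∑ s : Fin l, if (σ s.castSucc : ℕ) = σ s.succ + 1 ∧ (i = s.castSucc ∨ i = s.succ) then 1 else 0

theorem Y_infl {l : ℕ} (σ : Equiv.Perm (Fin (l + 1))) (i : Fin (l + 1)) :
    Y (infl σ i) + dd σ i = Y σ := by
  rw [Y, Fin.sum_univ_succAbove _ i, infl_at, infl_lo _ _ _ le_rfl]
  simp only [le_refl, if_true, Fin.val_succ, Y, dd]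
  rw [if_neg (by omega), zero_add, ← Finset.sum_add_distrib]
  refine Finset.sum_congr rfl fun s _ => ?_
  simp only [(infl_slot σ i s).2, Fin.ext_iff, Fin.val_castSucc, Fin.val_succ]
  split_ifs <;> omega

theorem sum_dd {l : ℕ} (σ : Equiv.Perm (Fin (l + 1))) : ∑ i, dd σ i ≤ 2 * Y σ := by
  unfold dd Y
  rw [Finset.sum_comm, Finset.mul_sum]
  refine Finset.sum_le_sum fun s _ => ?_
  by_cases h : (σ s.castSucc : ℕ) = σ s.succ + 1
  · simp only [h, true_and, if_true]
    rw [← Finset.card_filter]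
    have : (Finset.univ.filter fun i : Fin (l + 1) => i = s.castSucc ∨ i = s.succ)
        = {s.castSucc, s.succ} := by ext; simp
    rw [this]
    exact Finset.card_le_two
  · simp [h]

theorem choose_drop (k y d : ℕ) : (y + d).choose (k + 1) ≤ y.choose (k + 1) + d * (y + d - 1).choose k := by
  induction d with
  | zero => simp
  | succ d ih =>
    rw [← add_assoc, Nat.choose_succ_succ']
    have : (y + d - 1).choose k ≤ (y + d).choose k := Nat.choose_le_choose _ (by omega)
    simp only [Nat.add_sub_cancel]
    nlinarith [Nat.mul_le_mul_left d this]

theorem choose_sum {ι : Type*} [Fintype ι] (k y' : ℕ) (y d : ι → ℕ) (h : ∀ i, y i + d i = y')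
    (hd : ∑ i, d i ≤ 2 * y') :
    Fintype.card ι * y'.choose k ≤ ∑ i, (y i).choose k + 2 * k * y'.choose k := by
  cases k with
  | zero => simp
  | succ k =>
    have h1 : ∑ _i : ι, y'.choose (k + 1) ≤ ∑ i, ((y i).choose (k + 1) + d i * (y' - 1).choose k) := by
      refine Finset.sum_le_sum fun i _ => ?_
      rw [← h i]; exact choose_drop _ _ _
    rw [Finset.sum_add_distrib, ← Finset.sum_mul] at h1
    simp only [Finset.sum_const, Finset.card_univ, smul_eq_mul] at h1
    have h2 : y' * (y' - 1).choose k = (k + 1) * y'.choose (k + 1) := by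
      cases y' with
      | zero => simp
      | succ y => rw [Nat.add_sub_cancel, Nat.add_one_mul_choose_eq]; ring
    have h3 := Nat.mul_le_mul_right ((y' - 1).choose k) hd
    nlinarith

/-- mixed factorial moments -/
noncomputable def T (m j k : ℕ) : ℕ :=
  ∑ π : Equiv.Perm (Fin (m + 1)), (X π).choose j * (Y π).choose k

theorem T_rec (l j k : ℕ) : (j + 1) * T (l + 1) (j + 1) k =
    ∑ σ : Equiv.Perm (Fin (l + 1)), ∑ i, (X σ).choose j * (Y (infl σ i)).choose k := by
  rw [Finset.sum_comm]
  have : ∀ i : Fin (l + 1),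
      ∑ σ : Equiv.Perm (Fin (l + 1)), (X σ).choose j * (Y (infl σ i)).choose k =
      ∑ π : Equiv.Perm (Fin (l + 2)), (if (π i.succ : ℕ) = π i.castSucc + 1 then
        (X π - 1).choose j * (Y π).choose k else 0) := by
    intro i
    rw [sum_inc i (fun π => (X π - 1).choose j * (Y π).choose k)]
    simp only [X_infl, Nat.add_sub_cancel]
  rw [Finset.sum_congr rfl fun i _ => this i, Finset.sum_comm, T, Finset.mul_sum]
  refine Finset.sum_congr rfl fun π _ => ?_
  have : ∀ i : Fin (l + 1), (if (π i.succ : ℕ) = π i.castSucc + 1 then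
        (X π - 1).choose j * (Y π).choose k else 0) =
      (if (π i.succ : ℕ) = π i.castSucc + 1 then 1 else 0) *
        ((X π - 1).choose j * (Y π).choose k) := by
    intro i; split_ifs <;> simp
  rw [Finset.sum_congr rfl fun i _ => this i, ← Finset.sum_mul, ← X, ← mul_assoc, ← mul_assoc]
  congr 1
  cases X π with
  | zero => simp
  | succ x => rw [Nat.add_sub_cancel, Nat.add_one_mul_choose_eq]; ring

theorem T_upper (l j k : ℕ) : (j + 1) * T (l + 1) (j + 1) k ≤ (l + 1) * T l j k := by
  rw [T_rec, T, Finset.mul_sum]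
  refine Finset.sum_le_sum fun σ _ => ?_
  calc _ ≤ ∑ _i : Fin (l + 1), (X σ).choose j * (Y σ).choose k := by
        refine Finset.sum_le_sum fun i _ => Nat.mul_le_mul_left _ (Nat.choose_le_choose _ ?_)
        have := Y_infl σ i; omega
    _ = _ := by simp

theorem T_lower (l j k : ℕ) :
    (l + 1) * T l j k ≤ (j + 1) * T (l + 1) (j + 1) k + 2 * k * T l j k := by
  rw [T_rec, T, Finset.mul_sum, Finset.mul_sum, ← Finset.sum_add_distrib]
  refine Finset.sum_le_sum fun σ _ => ?_
  have := choose_sum k (Y σ) (fun i => Y (infl σ i)) (fun i => dd σ i) (Y_infl σ) (sum_dd σ)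
  rw [Fintype.card_fin] at this
  rw [← Finset.mul_sum]
  have h := Nat.mul_le_mul_left ((X σ).choose j) this
  linarith

theorem X_rev {m : ℕ} (π : Equiv.Perm (Fin (m + 1))) : X (π.trans Fin.revPerm) = Y π := by
  unfold X Y
  refine Finset.sum_congr rfl fun s _ => ?_
  simp only [Equiv.trans_apply, Fin.revPerm_apply, Fin.val_rev]
  have := (π s.succ).2; have := (π s.castSucc).2
  congr 1
  apply propext
  omega

theorem T_symm (m k : ℕ) : T m 0 k = T m k 0 := by
  simp only [T, Nat.choose_zero_right, one_mul, mul_one]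
  let e : Equiv.Perm (Fin (m + 1)) ≃ Equiv.Perm (Fin (m + 1)) :=
    { toFun := fun π => π.trans Fin.revPerm
      invFun := fun π => π.trans Fin.revPerm
      left_inv := fun π => by ext; simp
      right_inv := fun π => by ext; simp }
  rw [← e.sum_comp (fun π => (X π).choose k)]
  refine Finset.sum_congr rfl fun π _ => ?_
  simp only [e, Equiv.coe_fn_mk, X_rev]

/-! ### Part III: asymptotics -/

/-- normalised moments -/
noncomputable def t (m j k : ℕ) : ℝ :=
  (T m j k : ℝ) * j.factorial * k.factorial / (m + 1).factorial

theorem t_nonneg (m j k : ℕ) : 0 ≤ t m j k := by unfold t; positivity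

theorem t_zero (m : ℕ) : t m 0 0 = 1 := by
  have : T m 0 0 = (m + 1).factorial := by simp [T, Fintype.card_perm]
  rw [t, this]
  have : ((m + 1).factorial : ℝ) ≠ 0 := by positivity
  simp [this]

theorem t_succ_zero (j k : ℕ) : t 0 (j + 1) k = 0 := by
  have : T 0 (j + 1) k = 0 := by simp [T, X]
  simp [t, this]

theorem t_eq (l j k : ℕ) : t (l + 1) (j + 1) k =
    (((j + 1) * T (l + 1) (j + 1) k : ℕ) : ℝ) *
      (j.factorial * k.factorial / (l + 1).factorial) / (l + 2) := by
  rw [t, Nat.factorial_succ (l + 1), Nat.factorial_succ j]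
  have : ((l + 1).factorial : ℝ) ≠ 0 := by positivity
  have : (l : ℝ) + 2 ≠ 0 := by positivity
  push_cast
  field_simp
  ring

theorem t_eq' (l j k : ℕ) : t l j k =
    (T l j k : ℝ) * (j.factorial * k.factorial / (l + 1).factorial) := by
  rw [t]; ring

theorem t_upper (l j k : ℕ) : t (l + 1) (j + 1) k ≤ t l j k := by
  have h := T_upper l j k
  have h' : (((j + 1) * T (l + 1) (j + 1) k : ℕ) : ℝ) ≤ ((l + 1) * T l j k : ℕ) := by
    exact_mod_cast h
  rw [t_eq, t_eq', div_le_iff₀ (by positivity)]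
  have q : (0 : ℝ) ≤ j.factorial * k.factorial / (l + 1).factorial := by positivity
  have := mul_le_mul_of_nonneg_right h' q
  have q2 : (0 : ℝ) ≤ (T l j k : ℝ) * (j.factorial * k.factorial / (l + 1).factorial) := by
    positivity
  push_cast at *
  nlinarith

theorem t_lower (l j k : ℕ) :
    (1 - (1 + 2 * k) / ((l : ℝ) + 2)) * t l j k ≤ t (l + 1) (j + 1) k := by
  have h := T_lower l j k
  have h' : (((l + 1) * T l j k : ℕ) : ℝ) ≤
      ((j + 1) * T (l + 1) (j + 1) k : ℕ) + ((2 * k * T l j k : ℕ) : ℝ) := by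
    exact_mod_cast h
  have hl : (l : ℝ) + 2 ≠ 0 := by positivity
  have e : (1 - (1 + 2 * k) / ((l : ℝ) + 2)) = ((l : ℝ) + 1 - 2 * k) / (l + 2) := by
    field_simp; ring
  rw [t_eq, t_eq', e, div_mul_eq_mul_div]
  refine div_le_div_of_nonneg_right ?_ (by positivity)
  have q : (0 : ℝ) ≤ j.factorial * k.factorial / (l + 1).factorial := by positivity
  have := mul_le_mul_of_nonneg_right h' q
  push_cast at *
  nlinarith

theorem t_le_of_base (k : ℕ) (hb : ∀ m, t m 0 k ≤ 1) : ∀ j m, t m j k ≤ 1 := by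
  intro j
  induction j with
  | zero => exact hb
  | succ j ih =>
    intro m
    cases m with
    | zero => rw [t_succ_zero]; exact zero_le_one
    | succ l => exact (t_upper l j k).trans (ih l)

theorem t_ge_of_base (k : ℕ) (b : ℝ) (hb0 : 0 ≤ b) (hu : ∀ m, t m 0 k ≤ 1)
    (hb : ∀ m : ℕ, 1 - b / (m + 1) ≤ t m 0 k) :
    ∀ (j m : ℕ), 1 - ((b + 1 + 2 * k) * 2 ^ j - (1 + 2 * k)) / ((m : ℝ) + 1) ≤ t m j k := by
  intro j
  induction j with
  | zero => intro m; refine le_trans (le_of_eq ?_) (hb m); ring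
  | succ j ih =>
    intro m
    have hp : (1 : ℝ) ≤ 2 ^ j := one_le_pow₀ (by norm_num)
    have hk : (0 : ℝ) ≤ k := Nat.cast_nonneg k
    cases m with
    | zero =>
      rw [t_succ_zero]
      have : (1 : ℝ) ≤ (b + 1 + 2 * k) * 2 ^ (j + 1) - (1 + 2 * k) := by
        rw [pow_succ]; nlinarith
      simp; linarith
    | succ l =>
      have h1 := t_lower l j k
      have h2 := ih l
      have h3 := t_le_of_base k hu j l
      have hl : (0 : ℝ) ≤ l := Nat.cast_nonneg l
      set c : ℝ := (b + 1 + 2 * k) * 2 ^ j - (1 + 2 * k) with hc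
      have hc0 : 0 ≤ c := by rw [hc]; nlinarith
      have e : (b + 1 + 2 * k) * 2 ^ (j + 1) - (1 + 2 * k) = 2 * c + (1 + 2 * k) := by
        rw [hc]; ring
      rw [e]
      push_cast
      have e2 : (l : ℝ) + 1 + 1 = l + 2 := by ring
      rw [e2, add_div]
      have h4 : c / ((l : ℝ) + 1) ≤ 2 * c / (l + 2) := by
        rw [div_le_div_iff₀ (by positivity) (by positivity)]; nlinarith
      have h5 : (0 : ℝ) ≤ (1 + 2 * k) / ((l : ℝ) + 2) := by positivity
      nlinarith

theorem t_bounds0 (k m : ℕ) : t m 0 k ≤ 1 ∧ 1 - ((2 : ℝ) ^ k - 1) / (m + 1) ≤ t m 0 k := by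
  have e : t m 0 k = t m k 0 := by rw [t, t, T_symm]; ring
  rw [e]
  have hu : ∀ m, t m 0 0 ≤ 1 := fun m => (t_zero m).le
  refine ⟨t_le_of_base 0 hu k m, ?_⟩
  have := t_ge_of_base 0 0 le_rfl hu (fun m => by rw [t_zero]; simp) k m
  simpa using this

theorem t_abs (m j k : ℕ) : |t m j k - 1| ≤ 3 * 2 ^ j * 2 ^ k / ((m : ℝ) + 1) := by
  have hp : (1 : ℝ) ≤ 2 ^ k := one_le_pow₀ (by norm_num)
  have hpj : (1 : ℝ) ≤ 2 ^ j := one_le_pow₀ (by norm_num)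
  have h1 := t_le_of_base k (fun m => (t_bounds0 k m).1) j m
  have h2 := t_ge_of_base k (2 ^ k - 1) (by linarith) (fun m => (t_bounds0 k m).1)
    (fun m => (t_bounds0 k m).2) j m
  have hk : (k : ℝ) ≤ 2 ^ k := by exact_mod_cast (Nat.lt_two_pow_self (n := k)).le
  have hk0 : (0 : ℝ) ≤ k := Nat.cast_nonneg k
  have h3 : (((2 : ℝ) ^ k - 1 + 1 + 2 * k) * 2 ^ j - (1 + 2 * k)) / ((m : ℝ) + 1) ≤
      3 * 2 ^ j * 2 ^ k / ((m : ℝ) + 1) := by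
    refine div_le_div_of_nonneg_right ?_ (by positivity)
    nlinarith
  rw [abs_of_nonpos (by linarith)]
  linarith

/-- signs -/
noncomputable def w (j : ℕ) : ℝ := (if j = 0 then 1 else 0) - (-1) ^ j

theorem w_abs (j : ℕ) : |w j| ≤ 1 := by
  unfold w
  split_ifs with h
  · subst h; simp
  · simp

theorem sum_w {x n : ℕ} (h : x ≤ n) :
    ∑ j ∈ Finset.range (n + 1), w j * (x.choose j : ℝ) = if x = 0 then 0 else 1 := by
  have h1 : ∑ j ∈ Finset.range (n + 1), ((-1 : ℝ) ^ j * (x.choose j : ℝ)) =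
      ∑ j ∈ Finset.range (x + 1), ((-1 : ℝ) ^ j * (x.choose j : ℝ)) := by
    symm
    refine Finset.sum_subset (Finset.range_mono (by omega)) ?_
    intro j _ hj
    rw [Finset.mem_range] at hj
    rw [Nat.choose_eq_zero_of_lt (by omega)]; simp
  have h2 : ∑ j ∈ Finset.range (x + 1), ((-1 : ℝ) ^ j * (x.choose j : ℝ)) =
      if x = 0 then 1 else 0 := by
    have := Int.alternating_sum_range_choose (n := x)
    have := congrArg (fun z : ℤ => (z : ℝ)) this
    push_cast at this
    exact this
  simp only [w, sub_mul, Finset.sum_sub_distrib, h1, h2]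
  simp only [ite_mul, one_mul, zero_mul]
  rw [Finset.sum_ite_eq' (Finset.range (n + 1)) 0]
  simp
  split_ifs <;> simp

theorem X_le {m : ℕ} (π : Equiv.Perm (Fin (m + 1))) : X π ≤ m + 1 := by
  unfold X
  calc _ ≤ ∑ _s : Fin m, (1 : ℕ) := Finset.sum_le_sum fun s _ => by split_ifs <;> simp
    _ ≤ _ := by simp

theorem Y_le {m : ℕ} (π : Equiv.Perm (Fin (m + 1))) : Y π ≤ m + 1 := by
  rw [← X_rev]; exact X_le _

theorem hasInc_of_X {m : ℕ} (π : Equiv.Perm (Fin (m + 1))) (h : X π ≠ 0) : HasInc π := by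
  obtain ⟨s, _, hs⟩ := Finset.exists_ne_zero_of_sum_ne_zero h
  refine ⟨s.castSucc, s.succ, by simp, ?_⟩
  by_contra hc
  rw [if_neg hc] at hs
  exact hs rfl

theorem hasDec_of_Y {m : ℕ} (π : Equiv.Perm (Fin (m + 1))) (h : Y π ≠ 0) : HasDec π := by
  obtain ⟨s, _, hs⟩ := Finset.exists_ne_zero_of_sum_ne_zero h
  refine ⟨s.castSucc, s.succ, by simp, ?_⟩
  by_contra hc
  rw [if_neg hc] at hs
  exact hs rfl

theorem card_ge (m : ℕ) :
    ∑ j ∈ Finset.range (m + 2), ∑ k ∈ Finset.range (m + 2), w j * w k * (T m j k : ℝ) ≤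
      ((Finset.univ.filter fun p : Equiv.Perm (Fin (m + 1)) =>
        mu PPerm.one ⟨m + 1, p⟩ = 0).card : ℝ) := by
  have h1 : ∑ j ∈ Finset.range (m + 2), ∑ k ∈ Finset.range (m + 2), w j * w k * (T m j k : ℝ) =
      ∑ π : Equiv.Perm (Fin (m + 1)),
        (if X π = 0 then (0 : ℝ) else 1) * (if Y π = 0 then (0 : ℝ) else 1) := by
    have : ∀ π : Equiv.Perm (Fin (m + 1)),
        (if X π = 0 then (0 : ℝ) else 1) * (if Y π = 0 then (0 : ℝ) else 1) =
        ∑ j ∈ Finset.range (m + 2), ∑ k ∈ Finset.range (m + 2),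
          w j * w k * ((X π).choose j * (Y π).choose k : ℝ) := by
      intro π
      rw [← sum_w (X_le π), ← sum_w (Y_le π), Finset.sum_mul_sum]
      refine Finset.sum_congr rfl fun j _ => Finset.sum_congr rfl fun k _ => ?_
      ring
    rw [Finset.sum_congr rfl fun π _ => this π]
    refine Eq.trans ?_ Finset.sum_comm
    refine Finset.sum_congr rfl fun j _ => ?_
    refine Eq.trans ?_ Finset.sum_comm
    refine Finset.sum_congr rfl fun k _ => ?_
    rw [T]; push_cast; rw [Finset.mul_sum]
  rw [h1, Finset.card_filter]
  push_cast
  refine Finset.sum_le_sum fun π _ => ?_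
  by_cases hx : X π = 0
  · simp only [hx, if_true, zero_mul]; split_ifs <;> norm_num
  by_cases hy : Y π = 0
  · simp only [hy, if_true, mul_zero]; split_ifs <;> norm_num
  have : mu PPerm.one ⟨m + 1, π⟩ = 0 := mu_zero _ π (hasInc_of_X π hx) (hasDec_of_Y π hy)
  simp [hx, hy, this]

/-- partial sums -/
noncomputable def sn (n : ℕ) : ℝ := ∑ j ∈ Finset.range (n + 1), w j / j.factorial

theorem sn_close (n : ℕ) (hn : 1 ≤ n) : |sn n - (1 - 1 / Real.exp 1)| ≤ 2 / n := by
  have e : sn n = 1 - ∑ j ∈ Finset.range (n + 1), (-1 : ℝ) ^ j / j.factorial := by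
    simp only [sn, w, sub_div, Finset.sum_sub_distrib]
    congr 1
    simp only [ite_div, zero_div]
    rw [Finset.sum_ite_eq' (Finset.range (n + 1)) 0]
    simp
  have h := Real.exp_bound (x := -1) (by simp) (n := n + 1) (by omega)
  rw [e, one_div, ← Real.exp_neg]
  have e2 : (1 - ∑ j ∈ Finset.range (n + 1), (-1 : ℝ) ^ j / j.factorial) - (1 - Real.exp (-1)) =
    Real.exp (-1) - ∑ j ∈ Finset.range (n + 1), (-1 : ℝ) ^ j / j.factorial := by ring
  rw [e2]
  refine h.trans ?_
  have hn' : (1 : ℝ) ≤ n := by exact_mod_cast hn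
  have hf : (n : ℝ) ≤ (n + 1).factorial := by
    exact_mod_cast (Nat.le_succ n).trans (Nat.self_le_factorial (n + 1))
  rw [abs_neg, abs_one, one_pow, one_mul, div_le_div_iff₀ (by positivity) (by positivity)]
  push_cast
  nlinarith [mul_le_mul_of_nonneg_right hf (show (0 : ℝ) ≤ n + 1 by positivity),
    mul_nonneg (sub_nonneg.mpr hf) (show (0 : ℝ) ≤ n + 1 by positivity)]

theorem sum_close (m : ℕ) :
    |∑ j ∈ Finset.range (m + 2), ∑ k ∈ Finset.range (m + 2), w j * w k * (T m j k : ℝ) /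
      (m + 1).factorial - sn (m + 1) ^ 2| ≤ 3 * Real.exp 2 ^ 2 / ((m : ℝ) + 1) := by
  have e : sn (m + 1) ^ 2 = ∑ j ∈ Finset.range (m + 2), ∑ k ∈ Finset.range (m + 2),
      w j / j.factorial * (w k / k.factorial) := by
    rw [sq, sn, Finset.sum_mul_sum]
  rw [e, ← Finset.sum_sub_distrib]
  have hE : ∑ j ∈ Finset.range (m + 2), (2 : ℝ) ^ j / j.factorial ≤ Real.exp 2 :=
    Real.sum_le_exp_of_nonneg (by norm_num) _
  have hE0 : 0 ≤ ∑ j ∈ Finset.range (m + 2), (2 : ℝ) ^ j / j.factorial :=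
    Finset.sum_nonneg fun j _ => by positivity
  have key : ∀ j k, |w j * w k * (T m j k : ℝ) / (m + 1).factorial -
      w j / j.factorial * (w k / k.factorial)| ≤
      3 / ((m : ℝ) + 1) * (2 ^ j / j.factorial * (2 ^ k / k.factorial)) := by
    intro j k
    have h1 : w j * w k * (T m j k : ℝ) / (m + 1).factorial -
      w j / j.factorial * (w k / k.factorial) =
      (w j * w k) * ((t m j k - 1) / (j.factorial * k.factorial)) := by
      have := Nat.factorial_ne_zero j
      have := Nat.factorial_ne_zero k
      have := Nat.factorial_ne_zero (m + 1)
      rw [t]; field_simp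
    rw [h1, abs_mul, abs_mul, abs_div,
      abs_of_nonneg (show (0 : ℝ) ≤ j.factorial * k.factorial by positivity)]
    calc _ ≤ 1 * (|t m j k - 1| / (j.factorial * k.factorial : ℝ)) := by
          refine mul_le_mul_of_nonneg_right ?_ (by positivity)
          exact mul_le_one₀ (w_abs j) (abs_nonneg _) (w_abs k)
      _ ≤ (3 * 2 ^ j * 2 ^ k / ((m : ℝ) + 1)) / (j.factorial * k.factorial : ℝ) := by
          rw [one_mul]
          exact div_le_div_of_nonneg_right (t_abs m j k) (by positivity)
      _ = _ := by ring
  calc _ ≤ ∑ j ∈ Finset.range (m + 2), ∑ k ∈ Finset.range (m + 2),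
        3 / ((m : ℝ) + 1) * (2 ^ j / j.factorial * (2 ^ k / k.factorial)) := by
        refine (Finset.abs_sum_le_sum_abs _ _).trans (Finset.sum_le_sum fun j _ => ?_)
        rw [← Finset.sum_sub_distrib]
        exact (Finset.abs_sum_le_sum_abs _ _).trans (Finset.sum_le_sum fun k _ => key j k)
    _ = 3 / ((m : ℝ) + 1) * (∑ j ∈ Finset.range (m + 2), (2 : ℝ) ^ j / j.factorial) ^ 2 := by
        rw [sq, Finset.sum_mul_sum]
        simp only [Finset.mul_sum]
    _ ≤ 3 / ((m : ℝ) + 1) * Real.exp 2 ^ 2 := by gcongr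
    _ = _ := by ring

theorem density_bound (n : ℕ) (hn : 1 ≤ n) :
    (1 - 1 / Real.exp 1) ^ 2 - (3 * Real.exp 2 ^ 2 + 4) / n ≤ zeroDensity n := by
  obtain ⟨m, rfl⟩ : ∃ m, n = m + 1 := ⟨n - 1, by omega⟩
  have h1 := card_ge m
  have h2 := abs_le.mp (sum_close m)
  have h3 := abs_le.mp (sn_close (m + 1) hn)
  have h4 : (∑ j ∈ Finset.range (m + 2), ∑ k ∈ Finset.range (m + 2), w j * w k * (T m j k : ℝ) /
      (m + 1).factorial) ≤ zeroDensity (m + 1) := by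
    simp only [← Finset.sum_div]
    exact div_le_div_of_nonneg_right h1 (by positivity)
  have ha : 0 ≤ 1 - 1 / Real.exp 1 ∧ 1 - 1 / Real.exp 1 ≤ 1 := by
    have : 1 / Real.exp 1 ≤ 1 := by
      rw [div_le_one (Real.exp_pos 1)]; exact Real.one_le_exp zero_le_one
    have : 0 ≤ 1 / Real.exp 1 := by positivity
    constructor <;> linarith
  set a := 1 - 1 / Real.exp 1
  have h5 : a ^ 2 - 4 / ((m + 1 : ℕ) : ℝ) ≤ sn (m + 1) ^ 2 := by
    have p : (0 : ℝ) ≤ 2 / ((m + 1 : ℕ) : ℝ) := by positivity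
    have e : 4 / ((m + 1 : ℕ) : ℝ) = 2 * (2 / ((m + 1 : ℕ) : ℝ)) := by ring
    rw [e]
    nlinarith [sq_nonneg (sn (m + 1) - a), mul_nonneg ha.1 (sub_nonneg.mpr h3.1),
      mul_nonneg p (sub_nonneg.mpr ha.2), h3.1]
  rw [add_div]
  push_cast at h5 ⊢
  linarith [h2.1]

theorem zeroDensity_le_one (n : ℕ) : zeroDensity n ≤ 1 := by
  unfold zeroDensity
  rw [div_le_one (by positivity)]
  have := Finset.card_filter_le (Finset.univ : Finset (Equiv.Perm (Fin n)))
    (fun p => mu PPerm.one ⟨n, p⟩ = 0)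
  rw [Finset.card_univ, Fintype.card_perm, Fintype.card_fin] at this
  exact_mod_cast this

end MobZero

/-- **(Corollary `cor-incdec`.)**  There is a constant `C > 0` such that for
every `n ≥ 1`, the proportion of permutations `π` of length `n` with
`μ(1,π) = 0` is at least `(1 − 1/e)² − C/n`.  In particular
`liminf_{n→∞}` of this proportion is at least `(1 − 1/e)² ≥ 0.3995`. -/
theorem density_of_mobius_zeros :
    (∃ C : ℝ, 0 < C ∧ ∀ n : ℕ, 1 ≤ n →
        (1 - 1 / Real.exp 1) ^ 2 - C / n ≤ zeroDensity n) ∧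
      (1 - 1 / Real.exp 1) ^ 2 ≤ Filter.liminf zeroDensity Filter.atTop ∧
      (0.3995 : ℝ) ≤ (1 - 1 / Real.exp 1) ^ 2 := by
  refine ⟨⟨3 * Real.exp 2 ^ 2 + 4, by positivity, MobZero.density_bound⟩, ?_, ?_⟩
  · have ht : Filter.Tendsto (fun n : ℕ => (1 - 1 / Real.exp 1) ^ 2 - (3 * Real.exp 2 ^ 2 + 4) / (n : ℝ))
        Filter.atTop (nhds ((1 - 1 / Real.exp 1) ^ 2)) := by
      have := (tendsto_const_div_atTop_nhds_zero_nat (3 * Real.exp 2 ^ 2 + 4)).const_sub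
        ((1 - 1 / Real.exp 1) ^ 2)
      simpa using this
    rw [← ht.liminf_eq]
    refine Filter.liminf_le_liminf ?_ ht.isBoundedUnder_ge ?_
    · filter_upwards [Filter.eventually_ge_atTop 1] with n hn
      exact MobZero.density_bound n hn
    · exact (Filter.isBoundedUnder_of ⟨1, MobZero.zeroDensity_le_one⟩).isCoboundedUnder_ge
  · have h := Real.exp_one_gt_d9
    have h1 : 1 / Real.exp 1 ≤ 0.3679 := by
      rw [div_le_iff₀ (Real.exp_pos 1)]; linarith
    nlinarith
end

section
/- Let α and β be nonempty permutations, and let σ be a nonempty permutation that contains no interval copy of any permutation of the form α′ ⊕ β′ with α′, β′ nonempty, α′ ≤ α and β′ ≤ β. Then α ⊕ 1 ⊕ β is σ-narrow with σ-core α ⊕ β, and α ⊕ 1 ⊕ β is a σ-annihilator. -/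
/-!
The permutation pattern poset and its Möbius function.

A permutation of length `n` is represented as an element of the symmetric
group on `Fin n`; the collection of all permutations of all lengths is the
sigma type `PPerm`.  Pattern containment `PPerm.Le` makes `PPerm` into the
permutation pattern poset, and `mu` is its Möbius function, defined by the
usual recursion `μ(σ,σ) = 1`, `μ(σ,π) = -∑_{σ ≤ λ < π} μ(σ,λ)` for `σ < π`
and `μ(σ,π) = 0` otherwise.
-/

open scoped Classical

/-- `π` contains an interval copy of `α`: there is a set of `|α|` contiguous
positions of `π` (starting at position `i`), whose values form a contiguous
range (starting at value `v`), and whose entries are order-isomorphic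
to `α`. -/
def HasIntervalCopy (π α : PPerm) : Prop :=
  ∃ (f : Fin α.1 → Fin π.1) (i v : ℕ),
    (∀ a : Fin α.1, (f a : ℕ) = i + (a : ℕ)) ∧
    (∀ a : Fin α.1, v ≤ (π.2 (f a) : ℕ) ∧ (π.2 (f a) : ℕ) < v + α.1) ∧
    (∀ a b : Fin α.1, α.2 a < α.2 b ↔ π.2 (f a) < π.2 (f b))

/-- `φ` is a `σ`-annihilator: every permutation containing an interval copy
of `φ` is a `σ`-zero, i.e. has `μ(σ,·) = 0`. -/
def IsSigmaAnnihilator (σ φ : PPerm) : Prop :=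
  ∀ π : PPerm, HasIntervalCopy π φ → mu σ π = 0

/-- `φ` is `σ`-narrow with `σ`-core `φ⁻`: `φ⁻` is a permutation of length
`|φ| − 1` contained in `φ` such that every (nonempty) permutation in
`[1,φ) ∖ [1,φ⁻]` is a `σ`-annihilator. -/
def IsSigmaNarrowWithCore (σ φ φm : PPerm) : Prop :=
  φm.1 + 1 = φ.1 ∧ PPerm.Le φm φ ∧
    ∀ lam : PPerm, 0 < lam.1 → PPerm.Lt lam φ → ¬ PPerm.Le lam φm →
      IsSigmaAnnihilator σ lam


namespace PatAux

/-- `f` realises `σ` as a pattern in `π`. -/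
def Emb (σ π : PPerm) (f : Fin σ.1 → Fin π.1) : Prop :=
  StrictMono f ∧ ∀ a b : Fin σ.1, σ.2 a < σ.2 b ↔ π.2 (f a) < π.2 (f b)

theorem le_refl' (π : PPerm) : PPerm.Le π π := ⟨id, strictMono_id, fun _ _ => Iff.rfl⟩

theorem le_trans' {a b c : PPerm} (h : PPerm.Le a b) (h' : PPerm.Le b c) : PPerm.Le a c := by
  obtain ⟨f, hf, hf'⟩ := h
  obtain ⟨g, hg, hg'⟩ := h'
  exact ⟨g ∘ f, hg.comp hf, fun x y => (hf' x y).trans (hg' _ _)⟩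

theorem le_card {a b : PPerm} (h : PPerm.Le a b) : a.1 ≤ b.1 := by
  obtain ⟨f, hf, _⟩ := h
  simpa using Fintype.card_le_of_injective f hf.injective

theorem perm_eq_of_order {n : ℕ} (p q : Equiv.Perm (Fin n))
    (h : ∀ a b, p a < p b ↔ q a < q b) : p = q := by
  have hm : StrictMono (fun x => q (p.symm x)) := by
    intro x y hxy
    have := (h (p.symm x) (p.symm y)).1 (by simpa using hxy)
    exact this
  have : ∀ x, q (p.symm x) = x := by
    intro x
    have h1 : (fun x => q (p.symm x)) = id := by
      apply StrictMono.range_inj hm strictMono_id |>.1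
      rw [Set.range_id]
      exact (q.surjective.comp p.symm.surjective).range_eq
    exact congrFun h1 x
  ext a
  have := this (p a)
  simp at this
  rw [this]

theorem eq_of_le_of_card {a b : PPerm} (h : PPerm.Le a b) (hc : a.1 = b.1) : a = b := by
  obtain ⟨n, p⟩ := a
  obtain ⟨m, q⟩ := b
  obtain ⟨f, hf, hf'⟩ := h
  dsimp at hc f hf hf'
  subst hc
  have h1 : f = id := by
    apply StrictMono.range_inj hf strictMono_id |>.1
    rw [Set.range_id]
    exact (Finite.surjective_of_injective hf.injective).range_eq
  subst h1
  congr 1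
  exact perm_eq_of_order p q (by simpa using hf')

/-- all permutations of length `< N`. -/
noncomputable def D (N : ℕ) : Finset PPerm :=
  (Finset.range N).sigma fun m => (Finset.univ : Finset (Equiv.Perm (Fin m)))

theorem mem_D {N : ℕ} {π : PPerm} : π ∈ D N ↔ π.1 < N := by
  simp [D]

theorem muAux_succ (n : ℕ) (σ π : PPerm) : muAux (n+1) σ π =
    if σ = π then 1 else if PPerm.Le σ π then
      - ∑ l ∈ (D π.1).filter (fun l => PPerm.Le σ l ∧ PPerm.Le l π), muAux n σ l
    else 0 := by
  rw [muAux]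
  congr 2
  rw [D, Finset.sum_filter, Finset.sum_sigma]
  simp only [Finset.sum_filter]

theorem muAux_fuel (σ : PPerm) : ∀ n m : ℕ, ∀ π : PPerm, π.1 < n → π.1 < m →
    muAux n σ π = muAux m σ π := by
  intro n
  induction n with
  | zero => intro m π h; omega
  | succ n ih =>
    intro m π h h'
    obtain ⟨m, rfl⟩ : ∃ k, m = k + 1 := ⟨m - 1, by omega⟩
    rw [muAux_succ, muAux_succ]
    congr 3
    apply Finset.sum_congr rfl
    intro l hl
    rw [Finset.mem_filter, mem_D] at hl
    exact ih m l (by omega) (by omega)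

theorem mu_eq (σ π : PPerm) : mu σ π =
    if σ = π then 1 else if PPerm.Le σ π then
      - ∑ l ∈ (D π.1).filter (fun l => PPerm.Le σ l ∧ PPerm.Le l π), mu σ l
    else 0 := by
  rw [mu, muAux_succ]
  congr 3
  apply Finset.sum_congr rfl
  intro l hl
  rw [Finset.mem_filter, mem_D] at hl
  exact muAux_fuel _ _ _ _ (by omega) (by omega)

theorem sum_closed (σ π : PPerm) (h : σ ≠ π) :
    ∑ l ∈ (D (π.1 + 1)).filter (fun l => PPerm.Le σ l ∧ PPerm.Le l π), mu σ l = 0 := by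
  by_cases hle : PPerm.Le σ π
  · have : (D (π.1 + 1)).filter (fun l => PPerm.Le σ l ∧ PPerm.Le l π) =
        insert π ((D π.1).filter (fun l => PPerm.Le σ l ∧ PPerm.Le l π)) := by
      ext l
      simp only [Finset.mem_filter, Finset.mem_insert, mem_D]
      constructor
      · rintro ⟨h1, h2, h3⟩
        by_cases hc : l.1 = π.1
        · exact Or.inl (eq_of_le_of_card h3 hc)
        · exact Or.inr ⟨by omega, h2, h3⟩
      · rintro (rfl | ⟨h1, h2, h3⟩)
        · exact ⟨by omega, hle, le_refl' _⟩
        · exact ⟨by omega, h2, h3⟩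
    rw [this, Finset.sum_insert (by simp [mem_D]), mu_eq σ π, if_neg h, if_pos hle]
    ring
  · apply Finset.sum_eq_zero
    intro l hl
    rw [Finset.mem_filter] at hl
    exact absurd (le_trans' hl.2.1 hl.2.2) hle

/-- Core Möbius argument. -/
theorem mu_zero_of_core (σ π ρ : PPerm) (hc : ρ.1 + 1 = π.1) (hρ : PPerm.Le ρ π)
    (h1 : σ ≠ π) (h2 : σ ≠ ρ)
    (hz : ∀ l : PPerm, l.1 < π.1 → PPerm.Le l π → ¬ PPerm.Le l ρ → mu σ l = 0) :
    mu σ π = 0 := by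
  rw [mu_eq, if_neg h1]
  split_ifs with hle
  · rw [neg_eq_zero, ← sum_closed σ ρ h2, hc]
    symm
    apply Finset.sum_subset
    · intro l
      simp only [Finset.mem_filter]
      rintro ⟨a, b, c⟩
      exact ⟨a, b, le_trans' c hρ⟩
    · intro l
      simp only [Finset.mem_filter, mem_D]
      rintro ⟨a, b, c⟩ h
      exact hz l a c (fun h' => h ⟨a, b, h'⟩)
  · rfl

/-- Standardisation. -/
theorem std {k n : ℕ} (h : Fin k → Fin n) (hi : Function.Injective h) :
    ∃ p : Equiv.Perm (Fin k), ∀ a b, p a < p b ↔ h a < h b := by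
  have hc : (Finset.univ.image h).card = k := by
    rw [Finset.card_image_of_injective _ hi]; simp
  let e := (Finset.univ.image h).orderIsoOfFin hc
  let g : Fin k → Fin k := fun a => e.symm ⟨h a, by simp⟩
  have hg : ∀ a b, g a < g b ↔ h a < h b := by
    intro a b
    simp only [g, OrderIso.lt_iff_lt, Subtype.mk_lt_mk]
  have hgi : Function.Injective g := by
    intro a b hab
    apply hi
    have := congrArg Subtype.val (e.symm.injective hab)
    exact this
  exact ⟨Equiv.ofBijective g (Finite.injective_iff_bijective.1 hgi), fun a b => hg a b⟩

/-- `ρ` is `π` with position `m` deleted. -/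
def IsDel (π : PPerm) (m : Fin π.1) (ρ : PPerm) (e : Fin ρ.1 → Fin π.1) : Prop :=
  Emb ρ π e ∧ ∀ x, x ≠ m → ∃ y, e y = x

theorem exists_del (π : PPerm) (m : Fin π.1) : ∃ ρ e, ρ.1 + 1 = π.1 ∧ IsDel π m ρ e := by
  obtain ⟨n, p⟩ := π
  dsimp at m
  obtain ⟨k, rfl⟩ : ∃ k, n = k + 1 := ⟨n - 1, by have := m.2; omega⟩
  obtain ⟨q, hq⟩ := std (fun a => p (m.succAbove a))
    (p.injective.comp Fin.succAbove_right_injective)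
  refine ⟨⟨k, q⟩, m.succAbove, rfl, ⟨Fin.strictMono_succAbove m, hq⟩, ?_⟩
  intro x hx
  exact Fin.exists_succAbove_eq hx

theorem le_of_avoid {π : PPerm} {m : Fin π.1} {ρ : PPerm} {e : Fin ρ.1 → Fin π.1}
    (h : IsDel π m ρ e) {l : PPerm} {f : Fin l.1 → Fin π.1} (hf : Emb l π f)
    (ha : ∀ x, f x ≠ m) : PPerm.Le l ρ := by
  choose g hg using fun x => h.2 (f x) (ha x)
  refine ⟨g, ?_, ?_⟩
  · intro a b hab
    rw [← h.1.1.lt_iff_lt, hg, hg]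
    exact hf.1 hab
  · intro a b
    rw [h.1.2, hg, hg]
    exact hf.2 a b

def EmbSet (π α : PPerm) (A : Set (Fin π.1)) : Prop :=
  ∃ g : Fin π.1 → Fin α.1, ∀ x ∈ A, ∀ y ∈ A,
    (x < y → g x < g y) ∧ (π.2 x < π.2 y ↔ α.2 (g x) < α.2 (g y))

def Below (π : PPerm) (A B : Set (Fin π.1)) : Prop :=
  ∀ a ∈ A, ∀ b ∈ B, a < b ∧ π.2 a < π.2 b

def Modl (π : PPerm) (I : Set (Fin π.1)) : Prop :=
  ∀ x, x ∉ I → ∀ y ∈ I, ∀ z ∈ I, (x < y ↔ x < z) ∧ (π.2 x < π.2 y ↔ π.2 x < π.2 z)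

structure TwoBlock (α β π : PPerm) (A B : Set (Fin π.1)) : Prop where
  hA : A.Nonempty
  hB : B.Nonempty
  hAB : Below π A B
  eA : EmbSet π α A
  eB : EmbSet π β B
  md : Modl π (A ∪ B)

structure GoodAt (α β π : PPerm) (A : Set (Fin π.1)) (m : Fin π.1) (B : Set (Fin π.1)) :
    Prop where
  hA : A.Nonempty
  hB : B.Nonempty
  hAm : ∀ a ∈ A, a < m ∧ π.2 a < π.2 m
  hmB : ∀ b ∈ B, m < b ∧ π.2 m < π.2 b
  eA : EmbSet π α A
  eB : EmbSet π β B
  md : Modl π (A ∪ {m} ∪ B)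

def Good (α β π : PPerm) : Prop := ∃ A m B, GoodAt α β π A m B

theorem Emb.pos {l π : PPerm} {f : Fin l.1 → Fin π.1} (hf : Emb l π f) (a b : Fin l.1) :
    a < b ↔ f a < f b := hf.1.lt_iff_lt.symm

theorem EmbSet.pull {l π α : PPerm} {f : Fin l.1 → Fin π.1} (hf : Emb l π f)
    {A : Set (Fin π.1)} (h : EmbSet π α A) : EmbSet l α (f ⁻¹' A) := by
  obtain ⟨g, hg⟩ := h
  refine ⟨g ∘ f, fun x hx y hy => ?_⟩
  have := hg (f x) hx (f y) hy
  exact ⟨fun h => this.1 (hf.1 h), (hf.2 x y).trans this.2⟩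

theorem Modl.pull {l π : PPerm} {f : Fin l.1 → Fin π.1} (hf : Emb l π f)
    {I : Set (Fin π.1)} (h : Modl π I) : Modl l (f ⁻¹' I) := by
  intro x hx y hy z hz
  rw [hf.pos, hf.pos, hf.2, hf.2]
  exact h (f x) hx (f y) hy (f z) hz

theorem GoodAt.twoBlock {α β π : PPerm} (hβ : 0 < β.1) {A B m} (h : GoodAt α β π A m B) :
    TwoBlock α β π A {m} where
  hA := h.hA
  hB := ⟨m, rfl⟩
  hAB := by
    intro a ha b hb
    rw [Set.mem_singleton_iff] at hb
    subst hb
    exact h.hAm a ha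
  eA := h.eA
  eB := by
    refine ⟨fun _ => ⟨0, hβ⟩, ?_⟩
    intro x hx y hy
    rw [Set.mem_singleton_iff] at hx hy
    subst hx
    subst hy
    simp
  md := by
    intro x hx y hy z hz
    by_cases hB : x ∈ B
    · have key : ∀ y ∈ A ∪ {m}, ¬ x < y ∧ ¬ π.2 x < π.2 y := by
        rintro y (hy | hy)
        · have h1 := h.hAm y hy
          have h2 := h.hmB x hB
          exact ⟨not_lt.2 (h1.1.trans h2.1).le, not_lt.2 (h1.2.trans h2.2).le⟩
        · rw [Set.mem_singleton_iff] at hy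
          subst hy
          have h2 := h.hmB x hB
          exact ⟨not_lt.2 h2.1.le, not_lt.2 h2.2.le⟩
      have h1 := key y hy
      have h2 := key z hz
      tauto
    · exact h.md x (by simp only [Set.mem_union] at *; tauto) y (Or.inl hy) z (Or.inl hz)

theorem GoodAt.del_twoBlock {α β π ρ : PPerm} {A B m e} (h : GoodAt α β π A m B)
    (hd : IsDel π m ρ e) (hc : ρ.1 + 1 = π.1) : TwoBlock α β ρ (e ⁻¹' A) (e ⁻¹' B) := by
  have hm : ∀ x, e x ≠ m := by
    intro x hx
    have hs : Function.Surjective e := by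
      intro y
      by_cases hy : y = m
      · exact ⟨x, hx.trans hy.symm⟩
      · exact hd.2 y hy
    have := Fintype.card_le_of_surjective e hs
    simp at this
    omega
  refine ⟨?_, ?_, ?_, h.eA.pull hd.1, h.eB.pull hd.1, ?_⟩
  · obtain ⟨a, ha⟩ := h.hA
    obtain ⟨y, rfl⟩ := hd.2 a (h.hAm a ha).1.ne
    exact ⟨y, ha⟩
  · obtain ⟨a, ha⟩ := h.hB
    obtain ⟨y, rfl⟩ := hd.2 a (h.hmB a ha).1.ne'
    exact ⟨y, ha⟩
  · intro a ha b hb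
    have h1 := h.hAm _ ha
    have h2 := h.hmB _ hb
    rw [hd.1.pos, hd.1.2]
    exact ⟨h1.1.trans h2.1, h1.2.trans h2.2⟩
  · have := h.md.pull hd.1
    have he : e ⁻¹' (A ∪ {m} ∪ B) = e ⁻¹' A ∪ e ⁻¹' B := by
      ext x
      have := hm x
      simp [this]
    rwa [he] at this

/-- Replacing the point `m` by another point of the module. -/
theorem emb_update {l π : PPerm} {f : Fin l.1 → Fin π.1} (hf : Emb l π f) (m' : Fin l.1)
    (a : Fin π.1)
    (h : ∀ x, x ≠ m' → (f x < a ↔ f x < f m') ∧ (π.2 (f x) < π.2 a ↔ π.2 (f x) < π.2 (f m'))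
      ∧ f x ≠ a) :
    Emb l π (Function.update f m' a) := by
  constructor
  · intro x y hxy
    by_cases hx : x = m'
    · subst hx
      have hy : y ≠ x := hxy.ne'
      have := h y hy
      rw [Function.update_self, Function.update_of_ne hy]
      refine lt_of_le_of_ne (not_lt.1 fun h' => ?_) this.2.2.symm
      exact absurd (this.1.1 h') (not_lt.2 (hf.1 hxy).le)
    · by_cases hy : y = m'
      · subst hy
        rw [Function.update_self, Function.update_of_ne hx]
        exact (h x hx).1.2 (hf.1 hxy)
      · rw [Function.update_of_ne hx, Function.update_of_ne hy]
        exact hf.1 hxy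
  · intro x y
    by_cases hxy : x = y
    · subst hxy; simp
    by_cases hx : x = m'
    · subst hx
      have hy : y ≠ x := Ne.symm hxy
      have h1 := h y hy
      rw [Function.update_self, Function.update_of_ne hy, hf.2]
      have n1 : π.2 (f y) ≠ π.2 a := fun e => h1.2.2 (π.2.injective e)
      have n2 : π.2 (f y) ≠ π.2 (f x) := fun e => hy (hf.1.injective (π.2.injective e))
      rw [← not_le, ← not_le, le_iff_lt_or_eq, le_iff_lt_or_eq, h1.2.1]
      simp [n1, n2]
    · by_cases hy : y = m'
      · subst hy
        rw [Function.update_self, Function.update_of_ne hx, hf.2]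
        exact (h x hx).2.1.symm
      · rw [Function.update_of_ne hx, Function.update_of_ne hy]
        exact hf.2 x y

/-- Key trichotomy. -/
theorem good_of_le {α β π ρ l : PPerm} {A B m e} (h : GoodAt α β π A m B)
    (hd : IsDel π m ρ e) (hl : PPerm.Le l π) (hn : ¬ PPerm.Le l ρ) : Good α β l := by
  obtain ⟨f, hf1, hf2⟩ := hl
  have hf : Emb l π f := ⟨hf1, hf2⟩
  obtain ⟨m', hm'⟩ : ∃ x, f x = m := by
    by_contra hc
    push Not at hc
    exact hn (le_of_avoid hd hf hc)
  have hsing : f ⁻¹' {m} = {m'} := by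
    ext x
    simp only [Set.mem_preimage, Set.mem_singleton_iff, ← hm']
    exact hf1.injective.eq_iff
  have hA : (f ⁻¹' A).Nonempty := by
    by_contra hc
    rw [Set.not_nonempty_iff_eq_empty] at hc
    have hc' : ∀ x, f x ∉ A := fun x hx => by
      have : x ∈ f ⁻¹' A := hx
      rw [hc] at this
      exact this
    obtain ⟨a, ha⟩ := h.hA
    have ham := h.hAm a ha
    apply hn
    refine le_of_avoid hd (emb_update hf m' a ?_) ?_
    · intro x hx
      rw [hm']
      by_cases hB : f x ∈ B
      · have hb := h.hmB _ hB
        refine ⟨iff_of_false (not_lt.2 (ham.1.trans hb.1).le) (not_lt.2 hb.1.le),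
          iff_of_false (not_lt.2 (ham.2.trans hb.2).le) (not_lt.2 hb.2.le), ?_⟩
        exact (ham.1.trans hb.1).ne'
      · have hxm : f x ≠ m := fun e => hx (hf1.injective (e.trans hm'.symm))
        have := h.md (f x) (by simp [hc' x, hB, hxm]) a (by simp [ha]) m (by simp)
        exact ⟨this.1, this.2, fun e => hc' x (e ▸ ha)⟩
    · intro x
      by_cases hx : x = m'
      · subst hx
        rw [Function.update_self]
        exact ham.1.ne
      · rw [Function.update_of_ne hx]
        exact fun e => hx (hf1.injective (e.trans hm'.symm))
  have hB : (f ⁻¹' B).Nonempty := by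
    by_contra hc
    rw [Set.not_nonempty_iff_eq_empty] at hc
    have hc' : ∀ x, f x ∉ B := fun x hx => by
      have : x ∈ f ⁻¹' B := hx
      rw [hc] at this
      exact this
    obtain ⟨a, ha⟩ := h.hB
    have ham := h.hmB a ha
    apply hn
    refine le_of_avoid hd (emb_update hf m' a ?_) ?_
    · intro x hx
      rw [hm']
      by_cases hB : f x ∈ A
      · have hb := h.hAm _ hB
        refine ⟨iff_of_true (hb.1.trans ham.1) hb.1,
          iff_of_true (hb.2.trans ham.2) hb.2, ?_⟩
        exact (hb.1.trans ham.1).ne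
      · have hxm : f x ≠ m := fun e => hx (hf1.injective (e.trans hm'.symm))
        have := h.md (f x) (by simp [hc' x, hB, hxm]) a (by simp [ha]) m (by simp)
        exact ⟨this.1, this.2, fun e => hc' x (e ▸ ha)⟩
    · intro x
      by_cases hx : x = m'
      · subst hx
        rw [Function.update_self]
        exact ham.1.ne'
      · rw [Function.update_of_ne hx]
        exact fun e => hx (hf1.injective (e.trans hm'.symm))
  refine ⟨f ⁻¹' A, m', f ⁻¹' B, hA, hB, ?_, ?_, h.eA.pull hf, h.eB.pull hf, ?_⟩
  · intro a ha
    rw [hf.pos, hf.2, hm']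
    exact h.hAm _ ha
  · intro a ha
    rw [hf.pos, hf.2, hm']
    exact h.hmB _ ha
  · have := h.md.pull hf
    rwa [Set.preimage_union, Set.preimage_union, hsing] at this

/-- Pushing goodness forward along an interval copy. -/
theorem Good.push {α β l π : PPerm} (h : Good α β l) (hc : HasIntervalCopy π l) :
    Good α β π := by
  obtain ⟨A, m, B, h⟩ := h
  obtain ⟨f, i, v, hi, hv, ho⟩ := hc
  have hf : Emb l π f := by
    refine ⟨?_, ho⟩
    intro a b hab
    rw [Fin.lt_def, hi, hi]
    have := Fin.lt_def.1 hab
    omega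
  have hmod : Modl π (Set.range f) := by
    have hsurj : ∀ w : ℕ, v ≤ w → w < v + l.1 → ∃ a, (π.2 (f a) : ℕ) = w := by
      have himg : Finset.univ.image (fun a => (π.2 (f a) : ℕ)) = Finset.Ico v (v + l.1) := by
        apply Finset.eq_of_subset_of_card_le
        · intro w hw
          obtain ⟨a, _, rfl⟩ := Finset.mem_image.1 hw
          exact Finset.mem_Ico.2 (hv a)
        · rw [Finset.card_image_of_injective]
          · simp
          · intro a b hab
            exact hf.1.injective (π.2.injective (Fin.ext hab))
      intro w h1 h2
      have : w ∈ Finset.univ.image (fun a => (π.2 (f a) : ℕ)) := by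
        rw [himg]; exact Finset.mem_Ico.2 ⟨h1, h2⟩
      simpa using this
    rintro x hx _ ⟨y, rfl⟩ _ ⟨z, rfl⟩
    have hp : (x : ℕ) < i ∨ i + l.1 ≤ x := by
      by_contra hcon
      push Not at hcon
      apply hx
      refine ⟨⟨x - i, by omega⟩, Fin.ext ?_⟩
      rw [hi]
      simp
      omega
    have hval : (π.2 x : ℕ) < v ∨ v + l.1 ≤ π.2 x := by
      by_contra hcon
      push Not at hcon
      obtain ⟨a, ha⟩ := hsurj (π.2 x) hcon.1 hcon.2
      exact hx ⟨a, π.2.injective (Fin.ext ha)⟩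
    have h1 := hi y
    have h2 := hi z
    have h3 := hv y
    have h4 := hv z
    have h5 := y.2
    have h6 := z.2
    simp only [Fin.lt_def]
    constructor <;> omega
  have hemb : ∀ (γ : PPerm) (C : Set (Fin l.1)), EmbSet l γ C → EmbSet π γ (f '' C) := by
    rintro γ C ⟨g, hg⟩
    refine ⟨fun x => g (@Function.invFun _ _ ⟨m⟩ f x), ?_⟩
    rintro _ ⟨x, hx, rfl⟩ _ ⟨y, hy, rfl⟩
    have e1 : ∀ x, @Function.invFun _ _ ⟨m⟩ f (f x) = x :=
      @Function.leftInverse_invFun _ _ ⟨m⟩ f hf.1.injective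
    beta_reduce
    rw [e1, e1, ← hf.pos, ← hf.2]
    exact hg x hx y hy
  refine ⟨f '' A, f m, f '' B, h.hA.image f, h.hB.image f, ?_, ?_, hemb _ _ h.eA,
    hemb _ _ h.eB, ?_⟩
  · rintro _ ⟨a, ha, rfl⟩
    rw [← hf.pos, ← hf.2]
    exact h.hAm a ha
  · rintro _ ⟨a, ha, rfl⟩
    rw [← hf.pos, ← hf.2]
    exact h.hmB a ha
  · have he : f '' A ∪ {f m} ∪ f '' B = f '' (A ∪ {m} ∪ B) := by
      rw [Set.image_union, Set.image_union, Set.image_singleton]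
    rw [he]
    rintro x hx _ ⟨y, hy, rfl⟩ _ ⟨z, hz, rfl⟩
    by_cases hr : x ∈ Set.range f
    · obtain ⟨x, rfl⟩ := hr
      rw [← hf.pos, ← hf.pos, ← hf.2, ← hf.2]
      exact h.md x (fun h' => hx ⟨x, h', rfl⟩) y hy z hz
    · exact hmod x hr _ ⟨y, rfl⟩ _ ⟨z, rfl⟩

theorem dsum_castAdd (α β : PPerm) (a : Fin α.1) :
    (PPerm.dsum α β).2 (Fin.castAdd β.1 a) = Fin.castAdd β.1 (α.2 a) := by
  change finSumFinEquiv (Equiv.sumCongr α.2 β.2 (finSumFinEquiv.symm (Fin.castAdd β.1 a))) = _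
  rw [finSumFinEquiv_symm_apply_castAdd]
  rfl

theorem dsum_natAdd (α β : PPerm) (b : Fin β.1) :
    (PPerm.dsum α β).2 (Fin.natAdd α.1 b) = Fin.natAdd α.1 (β.2 b) := by
  change finSumFinEquiv (Equiv.sumCongr α.2 β.2 (finSumFinEquiv.symm (Fin.natAdd α.1 b))) = _
  rw [finSumFinEquiv_symm_apply_natAdd]
  rfl

theorem dsum_lt (α β : PPerm) (x : Fin (PPerm.dsum α β).1) (h : x.1 < α.1) :
    ((PPerm.dsum α β).2 x : ℕ) = α.2 ⟨x.1, h⟩ := by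
  have : x = Fin.castAdd β.1 ⟨x.1, h⟩ := by ext; rfl
  conv_lhs => rw [this, dsum_castAdd]
  rfl

theorem dsum_ge (α β : PPerm) (x : Fin (PPerm.dsum α β).1) (b : Fin β.1)
    (h : x.1 = α.1 + b.1) :
    ((PPerm.dsum α β).2 x : ℕ) = α.1 + β.2 b := by
  have : x = Fin.natAdd α.1 b := by ext; exact h
  rw [this, dsum_natAdd]
  rfl

abbrev phi (α β : PPerm) : PPerm := PPerm.dsum α (PPerm.dsum PPerm.one β)

theorem phi_card (α β : PPerm) : (phi α β).1 = α.1 + (1 + β.1) := rfl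

theorem phi_eq (α β : PPerm) (x : Fin (phi α β).1) (h : x.1 = α.1) :
    ((phi α β).2 x : ℕ) = α.1 := by
  rw [dsum_ge α _ x (⟨0, by change 0 < 1 + β.1; omega⟩ : Fin (PPerm.dsum PPerm.one β).1) (by simpa using h)]
  rw [dsum_lt PPerm.one β _ (by change 0 < 1; omega)]
  have : ∀ y : Fin PPerm.one.1, (PPerm.one.2 y : ℕ) = 0 := by
    intro y
    have : (PPerm.one.2 y : ℕ) < 1 := (PPerm.one.2 y).2
    omega
  rw [this]
  rfl

theorem phi_gt (α β : PPerm) (x : Fin (phi α β).1) (b : Fin β.1) (h : x.1 = α.1 + 1 + b) :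
    ((phi α β).2 x : ℕ) = α.1 + 1 + β.2 b := by
  rw [dsum_ge α _ x (⟨1 + b.1, by change _ < 1 + β.1; omega⟩ : Fin (PPerm.dsum PPerm.one β).1)
    (by simp only [h]; omega)]
  rw [dsum_ge PPerm.one β _ b rfl]
  change α.1 + (1 + _) = _
  omega

def mid (α β : PPerm) : Fin (phi α β).1 := ⟨α.1, by rw [phi_card]; omega⟩

theorem phi_good (α β : PPerm) (hα : 0 < α.1) (hβ : 0 < β.1) :
    GoodAt α β (phi α β) {x | x.1 < α.1} (mid α β) {x | α.1 < x.1} := by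
  refine ⟨⟨⟨0, by rw [phi_card]; omega⟩, hα⟩,
    ⟨⟨α.1 + 1, by rw [phi_card]; omega⟩, by simp⟩, ?_, ?_, ?_, ?_, ?_⟩
  · intro a ha
    refine ⟨ha, ?_⟩
    rw [Fin.lt_def, phi_eq α β (mid α β) rfl, dsum_lt α _ a ha]
    exact Fin.is_lt _
  · intro b hb
    refine ⟨hb, ?_⟩
    have hb' : α.1 < b.1 := hb
    have hlt : b.1 < α.1 + (1 + β.1) := b.2
    rw [Fin.lt_def, phi_eq α β (mid α β) rfl,
      phi_gt α β b ⟨b.1 - α.1 - 1, by omega⟩ (by simp only; omega)]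
    omega
  · refine ⟨fun x => if h : x.1 < α.1 then ⟨x.1, h⟩ else ⟨0, hα⟩, ?_⟩
    intro x hx y hy
    have hx' : x.1 < α.1 := hx
    have hy' : y.1 < α.1 := hy
    simp only [hx', hy', dif_pos]
    refine ⟨fun h => h, ?_⟩
    rw [Fin.lt_def, dsum_lt α _ x hx', dsum_lt α _ y hy', Fin.lt_def]
  · refine ⟨fun x => if h : x.1 - α.1 - 1 < β.1 then ⟨x.1 - α.1 - 1, h⟩ else ⟨0, hβ⟩, ?_⟩
    intro x hx y hy
    have hx' : α.1 < x.1 := hx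
    have hy' : α.1 < y.1 := hy
    have h1 : x.1 < α.1 + (1 + β.1) := x.2
    have h2 : y.1 < α.1 + (1 + β.1) := y.2
    have hx2 : x.1 - α.1 - 1 < β.1 := by omega
    have hy2 : y.1 - α.1 - 1 < β.1 := by omega
    simp only [hx2, hy2, dif_pos]
    constructor
    · intro h
      rw [Fin.lt_def] at h ⊢
      simp only
      omega
    · rw [Fin.lt_def, phi_gt α β x ⟨_, hx2⟩ (by simp only; omega),
        phi_gt α β y ⟨_, hy2⟩ (by simp only; omega), Fin.lt_def]
      omega
  · intro x hx
    exfalso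
    apply hx
    rcases lt_trichotomy x.1 α.1 with h | h | h
    · exact Or.inl (Or.inl h)
    · exact Or.inl (Or.inr (Fin.ext h))
    · exact Or.inr h

theorem phi_del (α β : PPerm) :
    ∃ e, IsDel (phi α β) (mid α β) (PPerm.dsum α β) e := by
  let e : Fin (PPerm.dsum α β).1 → Fin (phi α β).1 := fun y =>
    ⟨if y.1 < α.1 then y.1 else y.1 + 1, by
      have h : y.1 < α.1 + β.1 := y.2
      rw [phi_card]; split_ifs <;> omega⟩
  have he : ∀ y, (e y).1 = if y.1 < α.1 then y.1 else y.1 + 1 := fun _ => rfl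
  have hval : ∀ y, ((phi α β).2 (e y) : ℕ) =
      if y.1 < α.1 then ((PPerm.dsum α β).2 y : ℕ) else ((PPerm.dsum α β).2 y : ℕ) + 1 := by
    intro y
    have hy : y.1 < α.1 + β.1 := y.2
    split_ifs with h
    · rw [dsum_lt α β y h, dsum_lt α _ (e y) (by rw [he, if_pos h]; exact h)]
      congr 3
      rw [he, if_pos h]
    · rw [dsum_ge α β y ⟨y.1 - α.1, by omega⟩ (by simp only; omega),
        phi_gt α β (e y) ⟨y.1 - α.1, by omega⟩ (by rw [he, if_neg h]; simp only; omega)]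
      omega
  have hlo : ∀ y : Fin (PPerm.dsum α β).1, y.1 < α.1 ↔ ((PPerm.dsum α β).2 y : ℕ) < α.1 := by
    intro y
    have hy : y.1 < α.1 + β.1 := y.2
    by_cases h : y.1 < α.1
    · rw [dsum_lt α β y h]
      simp [h]
    · rw [dsum_ge α β y ⟨y.1 - α.1, by omega⟩ (by simp only; omega)]
      omega
  refine ⟨e, ⟨?_, ?_⟩, ?_⟩
  · intro x y hxy
    rw [Fin.lt_def] at hxy ⊢
    rw [he, he]
    split_ifs <;> omega
  · intro x y
    rw [Fin.lt_def, Fin.lt_def, hval, hval]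
    have h1 := hlo x
    have h2 := hlo y
    split_ifs <;> omega
  · intro x hx
    have hx1 : x.1 < α.1 + (1 + β.1) := x.2
    have hne : x.1 ≠ α.1 := fun h => hx (Fin.ext h)
    by_cases h : x.1 < α.1
    · refine ⟨⟨x.1, by change _ < α.1 + β.1; omega⟩, Fin.ext ?_⟩
      rw [he]
      simp [h]
    · refine ⟨⟨x.1 - 1, by change _ < α.1 + β.1; omega⟩, Fin.ext ?_⟩
      rw [he]
      simp only
      rw [if_neg (by omega)]
      omega

/-- pattern of a block of contiguous positions -/
theorem block (σ α : PPerm) (A : Set (Fin σ.1)) (hA : EmbSet σ α A) (i k : ℕ)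
    (hik : i + k ≤ σ.1) (hmem : ∀ x : Fin σ.1, i ≤ x.1 → x.1 < i + k → x ∈ A) :
    ∃ p : Equiv.Perm (Fin k), PPerm.Le ⟨k, p⟩ α ∧
      ∀ a b : Fin k, p a < p b ↔ σ.2 ⟨i + a, by omega⟩ < σ.2 ⟨i + b, by omega⟩ := by
  obtain ⟨g, hg⟩ := hA
  obtain ⟨p, hp⟩ := std (fun a : Fin k => σ.2 ⟨i + a, by omega⟩) (by
    intro a b hab
    have := congrArg Fin.val (σ.2.injective hab)
    simp only at this
    exact Fin.ext (by omega))
  refine ⟨p, ⟨fun a : Fin k => g ⟨i + a, by omega⟩, ?_, ?_⟩, hp⟩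
  · intro a b hab
    have hab' := Fin.lt_def.1 hab
    exact (hg _ (hmem _ (by simp) (by simp)) _ (hmem _ (by simp) (by simp))).1
      (by rw [Fin.lt_def]; simp only; omega)
  · intro a b
    rw [← (hg _ (hmem _ (by simp) (by simp)) _ (hmem _ (by simp) (by simp))).2]
    exact hp a b

theorem TwoBlock.copy {α β σ : PPerm} {A B : Set (Fin σ.1)} (h : TwoBlock α β σ A B) :
    ∃ α' β' : PPerm, 0 < α'.1 ∧ 0 < β'.1 ∧ PPerm.Le α' α ∧ PPerm.Le β' β ∧
      HasIntervalCopy σ (PPerm.dsum α' β') := by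
  obtain ⟨i, hiA, himin⟩ := Set.exists_min_image A id (Set.toFinite _) h.hA
  obtain ⟨j, hjB, hjmin⟩ := Set.exists_min_image B id (Set.toFinite _) h.hB
  obtain ⟨q, hqB, hqmax⟩ := Set.exists_max_image B id (Set.toFinite _) h.hB
  have hIne : (A ∪ B).Nonempty := ⟨i, Or.inl hiA⟩
  obtain ⟨x0, hx0, hx0min⟩ := Set.exists_min_image (A ∪ B) σ.2 (Set.toFinite _) hIne
  obtain ⟨x1, hx1, hx1max⟩ := Set.exists_max_image (A ∪ B) σ.2 (Set.toFinite _) hIne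
  simp only [id] at himin hjmin hqmax
  have hI : ∀ x, i ≤ x → x ≤ q → x ∈ A ∪ B := by
    intro x h1 h2
    by_contra hx
    have h3 := (h.md x hx i (Or.inl hiA) q (Or.inr hqB)).1
    have hxq : x ≠ q := fun e => hx (Or.inr (e ▸ hqB))
    exact absurd (h3.2 (lt_of_le_of_ne h2 hxq)) (not_lt.2 h1)
  have hI' : ∀ x, x ∈ A ∪ B → i ≤ x ∧ x ≤ q := by
    rintro x (hx | hx)
    · exact ⟨himin x hx, (h.hAB x hx q hqB).1.le⟩
    · exact ⟨(h.hAB i hiA x hx).1.le, hqmax x hx⟩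
  have hij := (h.hAB i hiA j hjB).1
  have hjq := hjmin q hqB
  have hmA : ∀ x, i ≤ x → x < j → x ∈ A := by
    intro x h1 h2
    rcases hI x h1 (h2.le.trans hjq) with hx | hx
    · exact hx
    · exact absurd (hjmin x hx) (not_le.2 h2)
  have hmB : ∀ x, j ≤ x → x ≤ q → x ∈ B := by
    intro x h1 h2
    rcases hI x (hij.le.trans h1) h2 with hx | hx
    · exact absurd (h.hAB x hx j hjB).1 (not_lt.2 h1)
    · exact hx
  have hcard : (σ.2 x1 : ℕ) + 1 - σ.2 x0 ≤ q.1 + 1 - i.1 := by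
    rw [← Fin.card_Icc, ← Fin.card_Icc,
      ← Finset.card_image_of_injective (Finset.Icc i q) σ.2.injective]
    apply Finset.card_le_card
    intro u hu
    rw [Finset.mem_Icc] at hu
    rw [Finset.mem_image]
    refine ⟨σ.2.symm u, ?_, by simp⟩
    rw [Finset.mem_Icc]
    apply hI'
    by_contra hx
    have h3 := (h.md _ hx x0 hx0 x1 hx1).2
    rw [Equiv.apply_symm_apply] at h3
    rcases eq_or_lt_of_le hu.2 with h4 | h4
    · exact hx (by rw [h4]; simpa using hx1)
    · exact absurd (h3.2 h4) (not_lt.2 hu.1)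
  rw [Fin.lt_def] at hij
  rw [Fin.le_def] at hjq
  have hqn := q.2
  obtain ⟨k, hk⟩ : ∃ k, j.1 = i.1 + k := ⟨j.1 - i.1, by omega⟩
  obtain ⟨l, hl⟩ : ∃ l, q.1 + 1 = j.1 + l := ⟨q.1 + 1 - j.1, by omega⟩
  obtain ⟨p, hpα, hp⟩ := block σ α A h.eA i k (by omega) (fun x h1 h2 =>
    hmA x h1 (by rw [Fin.lt_def]; omega))
  obtain ⟨r, hrβ, hr⟩ := block σ β B h.eB j l (by omega) (fun x h1 h2 =>
    hmB x h1 (by rw [Fin.le_def]; omega))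
  refine ⟨⟨k, p⟩, ⟨l, r⟩, by simp only; omega, by simp only; omega, hpα, hrβ, ?_⟩
  have hlen : ∀ a : Fin (k + l), i.1 + a.1 < σ.1 := fun a => by omega
  refine ⟨fun a : Fin (k + l) => ⟨i.1 + a.1, hlen a⟩, i.1, (σ.2 x0 : ℕ), fun a => rfl, ?_, ?_⟩
  · intro (a : Fin (k + l))
    have hm := hI ⟨i.1 + a.1, hlen a⟩ (by simp [Fin.le_def])
      (by rw [Fin.le_def]; simp only; omega)
    have h1 := hx0min _ hm
    have h2 := hx1max _ hm
    rw [Fin.le_def] at h1 h2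
    refine ⟨h1, ?_⟩
    change _ < (σ.2 x0 : ℕ) + (k + l)
    beta_reduce
    omega
  · intro (a : Fin (k + l)) (b : Fin (k + l))
    have hAB : ∀ (a : Fin k) (b : Fin l), σ.2 ⟨i.1 + a.1, by omega⟩ <
        σ.2 ⟨i.1 + (k + b.1), by omega⟩ := by
      intro a b
      exact (h.hAB _ (hmA _ (by simp [Fin.le_def]) (by simp [Fin.lt_def, hk])) _
        (hmB _ (by rw [Fin.le_def]; simp only; omega) (by rw [Fin.le_def]; simp only; omega))).2
    induction a using Fin.addCases with
    | left a =>
      induction b using Fin.addCases with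
      | left b =>
        rw [dsum_castAdd ⟨k, p⟩ ⟨l, r⟩ a, dsum_castAdd ⟨k, p⟩ ⟨l, r⟩ b]
        exact hp a b
      | right b =>
        rw [dsum_castAdd ⟨k, p⟩ ⟨l, r⟩ a, dsum_natAdd ⟨k, p⟩ ⟨l, r⟩ b]
        refine iff_of_true ?_ (hAB a b)
        have := (p a).2
        change (p a).1 < k + (r b).1
        omega
    | right a =>
      induction b using Fin.addCases with
      | left b =>
        rw [dsum_natAdd ⟨k, p⟩ ⟨l, r⟩ a, dsum_castAdd ⟨k, p⟩ ⟨l, r⟩ b]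
        refine iff_of_false ?_ (not_lt.2 (hAB b a).le)
        have := (p b).2
        change ¬ k + (r a).1 < (p b).1
        omega
      | right b =>
        rw [dsum_natAdd ⟨k, p⟩ ⟨l, r⟩ a, dsum_natAdd ⟨k, p⟩ ⟨l, r⟩ b]
        have h1 := hr a b
        have e : ∀ c : Fin l, (⟨j.1 + c.1, by omega⟩ : Fin σ.1) =
            ⟨i.1 + (k + c.1), by omega⟩ := fun c => Fin.ext (by simp only; omega)
        rw [e, e] at h1
        refine Iff.trans ?_ h1
        change k + (r a).1 < k + (r b).1 ↔ (r a).1 < (r b).1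
        omega

theorem good_zero (σ α β : PPerm) (hβ : 0 < β.1)
    (hfree : ∀ α' β' : PPerm, 0 < α'.1 → 0 < β'.1 → PPerm.Le α' α → PPerm.Le β' β →
      ¬ HasIntervalCopy σ (PPerm.dsum α' β')) :
    ∀ n : ℕ, ∀ π : PPerm, π.1 = n → Good α β π → mu σ π = 0 := by
  have hno : ∀ A B, ¬ TwoBlock α β σ A B := by
    intro A B h
    obtain ⟨α', β', h1, h2, h3, h4, h5⟩ := h.copy
    exact hfree α' β' h1 h2 h3 h4 h5
  intro n
  induction n using Nat.strong_induction_on with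
  | _ n ih =>
    rintro π hn ⟨A, m, B, h⟩
    obtain ⟨ρ, e, hc, hd⟩ := exists_del π m
    refine mu_zero_of_core σ π ρ hc ⟨e, hd.1⟩ ?_ ?_ ?_
    · rintro rfl
      exact hno _ _ (h.twoBlock hβ)
    · rintro rfl
      exact hno _ _ (h.del_twoBlock hd hc)
    · intro l hl hle hnle
      exact ih l.1 (by omega) l rfl (good_of_le h hd hle hnle)

end PatAux

/-- **(Proposition `pro-sum`.)**  Let `α` and `β` be nonempty permutations,
and let `σ` be a nonempty permutation containing no interval copy of any
permutation `α′ ⊕ β′` with `α′, β′` nonempty, `α′ ≤ α` and `β′ ≤ β`.  Then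
`α ⊕ 1 ⊕ β` is `σ`-narrow with `σ`-core `α ⊕ β`, and `α ⊕ 1 ⊕ β` is a
`σ`-annihilator. -/
theorem sum_one_sum_isSigmaAnnihilator (σ α β : PPerm)
    (hσ : 0 < σ.1) (hα : 0 < α.1) (hβ : 0 < β.1)
    (hfree : ∀ α' β' : PPerm, 0 < α'.1 → 0 < β'.1 → PPerm.Le α' α → PPerm.Le β' β →
      ¬ HasIntervalCopy σ (PPerm.dsum α' β')) :
    IsSigmaNarrowWithCore σ (PPerm.dsum α (PPerm.dsum PPerm.one β)) (PPerm.dsum α β) ∧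
      IsSigmaAnnihilator σ (PPerm.dsum α (PPerm.dsum PPerm.one β)) := by
  have hz : ∀ l : PPerm, PatAux.Good α β l → IsSigmaAnnihilator σ l := fun l hl π hπ =>
    PatAux.good_zero σ α β hβ hfree π.1 π rfl (hl.push hπ)
  have hg := PatAux.phi_good α β hα hβ
  obtain ⟨e, he⟩ := PatAux.phi_del α β
  refine ⟨⟨?_, ⟨e, he.1⟩, ?_⟩, hz _ ⟨_, _, _, hg⟩⟩
  · change α.1 + β.1 + 1 = α.1 + (1 + β.1)
    omega
  · intro l _ hl hnl
    exact hz l (PatAux.good_of_le hg he hl.1 hnl)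
end
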